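/- arXiv:1205.5424 — 3 statements merged into one kernel-verified Lean document; each statement's English description precedes it below -/
import Mathlib

section
/- (2-variable orientation-activity expansion for oriented matroid perspectives, realizable case.) For every vector configuration v : Fin n → V, every linear map π : V →ₗ[ℝ] W with v' = π ∘ v, and all real numbers x, y: t(M,M'; 2x, 2y, 1) = ∑_{A ⊆ Fin n} x^{o*_{M'}(A)} · y^{o_M(A)}, where o*_{M'}(A) is the number of elements dually orientation-active for v'_A and o_M(A) is the number of elements orientation-active for v_A. -/
open Set Submodule

/-- The reorientation of the vector configuration `v` on the subset `A`:
vectors indexed by `A` are negated. -/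
def reorient {n : ℕ} {V : Type*} [AddCommGroup V] (v : Fin n → V) (A : Finset (Fin n)) :
    Fin n → V :=
  fun i => if i ∈ A then -v i else v i

/-- `a` is orientation-active for the configuration `w`: it is the smallest element of a
positive circuit, i.e. there is a nonnegative linear dependence with positive coefficient
at `a` and zero coefficients below `a`. -/
def OActive {n : ℕ} {V : Type*} [AddCommGroup V] [Module ℝ V]
    (w : Fin n → V) (a : Fin n) : Prop :=
  ∃ c : Fin n → ℝ, (∀ i, 0 ≤ c i) ∧ (∑ i, c i • w i) = 0 ∧ 0 < c a ∧ ∀ i < a, c i = 0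

/-- `a` is dually orientation-active for the configuration `w`: it is the smallest element of
a positive cocircuit, i.e. there is a linear functional, nonnegative on the configuration,
positive at `w a` and vanishing on the vectors below `a`. -/
def ODualActive {n : ℕ} {V : Type*} [AddCommGroup V] [Module ℝ V]
    (w : Fin n → V) (a : Fin n) : Prop :=
  ∃ f : V →ₗ[ℝ] ℝ, (∀ i, 0 ≤ f (w i)) ∧ 0 < f (w a) ∧ ∀ i < a, f (w i) = 0

/-- `θ*(A)`: the number of elements outside `A` that are dually orientation-active for `v_A`. -/
noncomputable def thetaStar {n : ℕ} {V : Type*} [AddCommGroup V] [Module ℝ V]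
    (v : Fin n → V) (A : Finset (Fin n)) : ℕ :=
  {a : Fin n | a ∉ A ∧ ODualActive (reorient v A) a}.ncard

/-- `θ̄*(A)`: the number of elements of `A` that are dually orientation-active for `v_A`. -/
noncomputable def thetaStarBar {n : ℕ} {V : Type*} [AddCommGroup V] [Module ℝ V]
    (v : Fin n → V) (A : Finset (Fin n)) : ℕ :=
  {a : Fin n | a ∈ A ∧ ODualActive (reorient v A) a}.ncard

/-- `θ(A)`: the number of elements outside `A` that are orientation-active for `v_A`. -/
noncomputable def theta {n : ℕ} {V : Type*} [AddCommGroup V] [Module ℝ V]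
    (v : Fin n → V) (A : Finset (Fin n)) : ℕ :=
  {a : Fin n | a ∉ A ∧ OActive (reorient v A) a}.ncard

/-- `θ̄(A)`: the number of elements of `A` that are orientation-active for `v_A`. -/
noncomputable def thetaBar {n : ℕ} {V : Type*} [AddCommGroup V] [Module ℝ V]
    (v : Fin n → V) (A : Finset (Fin n)) : ℕ :=
  {a : Fin n | a ∈ A ∧ OActive (reorient v A) a}.ncard

/-- The rank of a set of indices: the dimension of the span of the corresponding vectors. -/
noncomputable def vrank {n : ℕ} {V : Type*} [AddCommGroup V] [Module ℝ V]
    (v : Fin n → V) (S : Set (Fin n)) : ℕ :=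
  Module.finrank ℝ ↥(span ℝ (v '' S))

/-- The Tutte polynomial of the matroid realized by the configuration `v`:
`t(x,y) = ∑_{A ⊆ Fin n} (x-1)^(r(E) - r(A)) * (y-1)^(|A| - r(A))`. -/
noncomputable def tutteV {n : ℕ} {V : Type*} [AddCommGroup V] [Module ℝ V]
    (v : Fin n → V) (x y : ℝ) : ℝ :=
  ∑ A : Finset (Fin n),
    (x - 1) ^ (vrank v Set.univ - vrank v ↑A) * (y - 1) ^ (A.card - vrank v ↑A)

/-- The evaluation at `z = 1` of the 3-variable Tutte polynomial of the oriented matroid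
perspective realized by the configurations `v` (for `M`) and `v'` (for `M'`):
`t(M,M';x,y,1) = ∑_{A ⊆ Fin n} (x-1)^(r'(E) - r'(A)) * (y-1)^(|A| - r(A))`. -/
noncomputable def tuttePerspV {n : ℕ} {V W : Type*} [AddCommGroup V] [Module ℝ V]
    [AddCommGroup W] [Module ℝ W] (v : Fin n → V) (v' : Fin n → W) (x y : ℝ) : ℝ :=
  ∑ A : Finset (Fin n),
    (x - 1) ^ (vrank v' Set.univ - vrank v' ↑A) * (y - 1) ^ (A.card - vrank v ↑A)

/-- `o(A)`: the number of orientation-active elements for the reorientation `v_A`. -/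
noncomputable def oCount {n : ℕ} {V : Type*} [AddCommGroup V] [Module ℝ V]
    (v : Fin n → V) (A : Finset (Fin n)) : ℕ :=
  {a : Fin n | OActive (reorient v A) a}.ncard

/-- `o*(A)`: the number of dually orientation-active elements for the reorientation `v_A`. -/
noncomputable def oStarCount {n : ℕ} {V : Type*} [AddCommGroup V] [Module ℝ V]
    (v : Fin n → V) (A : Finset (Fin n)) : ℕ :=
  {a : Fin n | ODualActive (reorient v A) a}.ncard

/-! Replace the configurations by two orthogonal subspaces of `ℝⁿ`: the space `K` of linear
dependences of `v` and the space `L` of values of linear functionals on `π ∘ v`. The nullity of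
`A` is the dimension of the part of `K` supported on `A`, the corank of `A` is the dimension of the
part of `L` supported off `A`, and the active elements are the leading elements of the vectors of
`K` and `L` that are nonnegative after reorientation. The theorem then holds for any two orthogonal
subspaces, by induction on `n`.

Removing the last coordinate, which is never below another one, pairs the reorientations that
differ there. A vector of `K` with positive last coordinate and one with negative last coordinate
can be combined to cancel that coordinate, so at most one of the two signs makes more elements
active in `K` than the sign `0` does; the same holds for `L`. By orthogonality a given sign cannot
do so for both `K` and `L`. Hence one of the two reorientations counts the active elements of the
shortening of `K` and the puncturing of `L`, the other those of the puncturing of `K` and the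
shortening of `L`, and the corank–nullity sum satisfies the same recursion.
-/

section Coordinates

variable {k V ι : Type*} [CommRing k] [AddCommGroup V] [Module k V]

/-- The vectors of a subspace `K` of a coordinate space that vanish outside `A`. -/
def supportedOn (K : Submodule k (ι → k)) (A : Finset ι) : Submodule k (ι → k) :=
  K ⊓ Submodule.pi {i | i ∉ A} fun _ => ⊥

theorem mem_supportedOn {K : Submodule k (ι → k)} {A : Finset ι} {c : ι → k} :
    c ∈ supportedOn K A ↔ c ∈ K ∧ ∀ i ∉ A, c i = 0 := Iff.rfl

variable (k) in
/-- The values of the linear functionals on a vector configuration: their sign vectors are the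
covectors of its oriented matroid. -/
def evaluations (w : ι → V) : Submodule k (ι → k) :=
  LinearMap.range (LinearMap.pi fun i => Module.Dual.eval k V (w i))

theorem map_funLeft_evaluations {κ : Type*} (w : ι → V) (g : κ → ι) :
    (evaluations k w).map (LinearMap.funLeft k k g) = evaluations k (w ∘ g) := by
  rw [evaluations, ← LinearMap.range_comp]
  rfl

variable [Fintype ι]

variable (k) in
/-- The linear dependences of a vector configuration: their sign vectors are the vectors of its
oriented matroid. -/
def dependences (v : ι → V) : Submodule k (ι → k) :=
  LinearMap.ker (Fintype.linearCombination k v)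

theorem mem_dependences {v : ι → V} {c : ι → k} :
    c ∈ dependences k v ↔ ∑ i, c i • v i = 0 := Iff.rfl

theorem map_funLeft_supportedOn_dependences (v : ι → V) (A : Finset ι) :
    (supportedOn (dependences k v) A).map (LinearMap.funLeft k k ((↑) : A → ι)) =
      dependences k (v ∘ ((↑) : A → ι)) := by
  have sum_eq {c : ι → k} (hc : ∀ i ∉ A, c i = 0) : ∑ i : A, c i • v i = ∑ i, c i • v i := by
    rw [Finset.sum_coe_sort A fun i => c i • v i]
    exact Finset.sum_subset A.subset_univ fun i _ hi => by rw [hc i hi, zero_smul]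
  ext d
  constructor
  · rintro ⟨c, ⟨hc, hsupp⟩, rfl⟩
    exact (sum_eq hsupp).trans hc
  · intro hd
    set c : ι → k := Function.extend (↑) d 0
    have hcd : c ∘ ((↑) : A → ι) = d := Function.extend_comp Subtype.val_injective d 0
    have hsupp : ∀ i ∉ A, c i = 0 := fun i hi =>
      Function.extend_apply' _ _ _ (by rintro ⟨j, rfl⟩; exact hi j.2)
    refine ⟨c, ⟨?_, hsupp⟩, hcd⟩
    rw [← hcd] at hd
    exact (sum_eq hsupp).symm.trans hd

end Coordinates

section Rank

variable {k V ι : Type*} [Field k] [AddCommGroup V] [Module k V]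

theorem finrank_map_add_finrank_inf_ker {V' : Type*} [AddCommGroup V'] [Module k V']
    (f : V →ₗ[k] V') (S : Submodule k V) [FiniteDimensional k S] :
    Module.finrank k (S.map f) + Module.finrank k ↥(S ⊓ LinearMap.ker f) = Module.finrank k S := by
  have h := (f.domRestrict S).finrank_range_add_finrank_ker
  rwa [LinearMap.range_domRestrict, LinearMap.ker_domRestrict, ← finrank_map_subtype_eq,
    map_comap_subtype] at h

theorem finrank_evaluations [Finite ι] (w : ι → V) :
    Module.finrank k (evaluations k w) = Module.finrank k (span k (range w)) := by
  classical
  have := Fintype.ofFinite ι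
  have h : evaluations k w = (LinearMap.range (Fintype.linearCombination k w).dualMap).map
      ((Pi.basisFun k ι).constr k).symm.toLinearMap := by
    rw [evaluations, ← LinearMap.range_comp]
    congr 1
    ext f i
    change f (w i) = f (Fintype.linearCombination k w (Pi.basisFun k ι i))
    rw [Pi.basisFun_apply, Fintype.linearCombination_apply_single, one_smul]
  rw [h, LinearEquiv.finrank_map_eq, LinearMap.finrank_range_dualMap_eq_finrank_range,
    Fintype.range_linearCombination]

theorem finrank_supportedOn_evaluations_add [Fintype ι] [DecidableEq ι] (w : ι → V) (A : Finset ι) :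
    Module.finrank k (supportedOn (evaluations k w) Aᶜ) + Module.finrank k (span k (w '' A)) =
      Module.finrank k (span k (range w)) := by
  have hker : supportedOn (evaluations k w) Aᶜ =
      evaluations k w ⊓ LinearMap.ker (LinearMap.funLeft k k ((↑) : A → ι)) := by
    ext c
    simp [mem_supportedOn, funext_iff]
  have hrange : range (w ∘ ((↑) : A → ι)) = w '' A := by simp [range_comp]
  rw [hker, ← finrank_evaluations w, ← hrange, ← finrank_evaluations, ← map_funLeft_evaluations,
    add_comm, finrank_map_add_finrank_inf_ker]

theorem finrank_dependences_add [Fintype ι] (v : ι → V) :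
    Module.finrank k (dependences k v) + Module.finrank k (span k (range v)) = Fintype.card ι := by
  rw [← Fintype.range_linearCombination, add_comm, dependences,
    LinearMap.finrank_range_add_finrank_ker, Module.finrank_fintype_fun_eq_card]

theorem finrank_supportedOn_dependences_add [Fintype ι] (v : ι → V) (A : Finset ι) :
    Module.finrank k (supportedOn (dependences k v) A) + Module.finrank k (span k (v '' A)) =
      A.card := by
  have hker : supportedOn (dependences k v) A ⊓
      LinearMap.ker (LinearMap.funLeft k k ((↑) : A → ι)) = ⊥ := by
    refine (Submodule.eq_bot_iff _).2 fun c hc => funext fun i => ?_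
    by_cases hi : i ∈ A
    · exact congrFun hc.2 ⟨i, hi⟩
    · exact hc.1.2 i hi
  have hrange : range (v ∘ ((↑) : A → ι)) = v '' A := by simp [range_comp]
  rw [← finrank_map_add_finrank_inf_ker (LinearMap.funLeft k k ((↑) : A → ι)), hker,
    finrank_bot, add_zero, map_funLeft_supportedOn_dependences, ← hrange,
    finrank_dependences_add, Fintype.card_coe]

end Rank

section FinSucc

variable {n : ℕ}

theorem sum_finset_fin_succ {M : Type*} [AddCommMonoid M] (F : Finset (Fin (n + 1)) → M) :
    ∑ A, F A = ∑ B : Finset (Fin n), (F (B.map Fin.castSuccEmb) +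
      F (insert (Fin.last n) (B.map Fin.castSuccEmb))) := by
  have sum_map (G : Finset (Fin (n + 1)) → M) :
      ∑ A ∈ (Finset.univ.map Fin.castSuccEmb).powerset, G A =
        ∑ B : Finset (Fin n), G (B.map Fin.castSuccEmb) := by
    refine (Finset.sum_nbij (fun B : Finset (Fin n) => B.map Fin.castSuccEmb) (fun B _ => ?_)
      (Finset.map_injective _).injOn (fun A hA => ?_) fun B _ => rfl).symm
    · simp
    · obtain ⟨B, -, rfl⟩ := Finset.subset_map_iff.1 (Finset.mem_powerset.1 hA)
      exact ⟨B, Finset.mem_coe.2 (Finset.mem_univ B), rfl⟩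
  rw [← Finset.powerset_univ, Fin.univ_castSuccEmb, Finset.cons_eq_insert,
    Finset.sum_powerset_insert (by simp), sum_map, sum_map, Finset.sum_add_distrib]

theorem compl_map_castSuccEmb (B : Finset (Fin n)) :
    (B.map Fin.castSuccEmb)ᶜ = insert (Fin.last n) (Bᶜ.map Fin.castSuccEmb) := by
  ext i
  cases i using Fin.lastCases <;> simp

theorem compl_insert_last_map_castSuccEmb (B : Finset (Fin n)) :
    (insert (Fin.last n) (B.map Fin.castSuccEmb))ᶜ = Bᶜ.map Fin.castSuccEmb := by
  rw [← compl_compl B, ← compl_map_castSuccEmb, compl_compl, compl_compl]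

open Classical in
theorem ncard_fin_succ (S : Set (Fin (n + 1))) :
    S.ncard = (Fin.castSucc ⁻¹' S).ncard + if Fin.last n ∈ S then 1 else 0 := by
  have ncard_eq_sum {m : ℕ} (T : Set (Fin m)) : T.ncard = ∑ i, if i ∈ T then 1 else 0 := by
    simp [Set.ncard_eq_toFinset_card', ← Set.filter_mem_univ_eq_toFinset]
  rw [ncard_eq_sum, ncard_eq_sum, Fin.sum_univ_castSucc]
  rfl

end FinSucc

section Puncture

variable {k : Type*} [Ring k] {n : ℕ}

/-- The puncturing of a subspace at the last coordinate, in the language of linear codes. It turns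
the vectors of an oriented matroid into those of the contraction of the last element, and the
covectors into those of the deletion. -/
def puncture (K : Submodule k (Fin (n + 1) → k)) : Submodule k (Fin n → k) :=
  K.map (LinearMap.funLeft k k Fin.castSucc)

theorem mem_puncture {K : Submodule k (Fin (n + 1) → k)} {c : Fin n → k} :
    c ∈ puncture K ↔ ∃ d ∈ K, d ∘ Fin.castSucc = c := Iff.rfl

/-- The shortening of a subspace at the last coordinate, in the language of linear codes. It turns
the vectors of an oriented matroid into those of the deletion of the last element, and the
covectors into those of the contraction. -/
def shorten (K : Submodule k (Fin (n + 1) → k)) : Submodule k (Fin n → k) :=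
  puncture (K ⊓ LinearMap.ker (LinearMap.proj (Fin.last n)))

theorem mem_shorten {K : Submodule k (Fin (n + 1) → k)} {c : Fin n → k} :
    c ∈ shorten K ↔ ∃ d ∈ K, d (Fin.last n) = 0 ∧ d ∘ Fin.castSucc = c := by
  simp only [shorten, mem_puncture, mem_inf, LinearMap.mem_ker, LinearMap.proj_apply, and_assoc]

theorem shorten_le_puncture (K : Submodule k (Fin (n + 1) → k)) : shorten K ≤ puncture K :=
  Submodule.map_mono inf_le_left

theorem eq_smul_single_last {c : Fin (n + 1) → k} (hc : ∀ i : Fin n, c i.castSucc = 0) :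
    c = c (Fin.last n) • Pi.single (Fin.last n) 1 := by
  refine funext (Fin.forall_fin_succ'.2 ⟨fun i => ?_, ?_⟩)
  · simp [hc i]
  · simp

theorem shorten_eq_puncture_of_single_last_mem {K : Submodule k (Fin (n + 1) → k)}
    (hK : Pi.single (Fin.last n) 1 ∈ K) : shorten K = puncture K := by
  refine (shorten_le_puncture K).antisymm ?_
  rintro _ ⟨c, hc, rfl⟩
  refine mem_shorten.2
    ⟨c - c (Fin.last n) • Pi.single (Fin.last n) 1, K.sub_mem hc (K.smul_mem _ hK), by simp, ?_⟩
  ext i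
  simp

end Puncture

section PunctureRank

variable {k : Type*} [Field k] {n : ℕ}

theorem single_last_mem_iff {K : Submodule k (Fin (n + 1) → k)} :
    Pi.single (Fin.last n) 1 ∈ K ↔
      ∃ c ∈ K, c (Fin.last n) ≠ 0 ∧ ∀ i : Fin n, c i.castSucc = 0 := by
  constructor
  · intro h
    exact ⟨_, h, by simp, fun i => by simp⟩
  · rintro ⟨c, hc, hlast, hinit⟩
    rw [eq_smul_single_last hinit] at hc
    exact (K.smul_mem_iff hlast).1 hc

open Classical in
theorem finrank_supportedOn_insert_last (K : Submodule k (Fin (n + 1) → k)) (B : Finset (Fin n)) :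
    Module.finrank k (supportedOn K (insert (Fin.last n) (B.map Fin.castSuccEmb))) =
      Module.finrank k (supportedOn (puncture K) B) +
        if Pi.single (Fin.last n) 1 ∈ K then 1 else 0 := by
  set S := supportedOn K (insert (Fin.last n) (B.map Fin.castSuccEmb))
  have hmap : S.map (LinearMap.funLeft k k Fin.castSucc) = supportedOn (puncture K) B := by
    ext c
    constructor
    · rintro ⟨d, ⟨hd, hsupp⟩, rfl⟩
      exact ⟨⟨d, hd, rfl⟩, fun i hi => hsupp i.castSucc (by simpa using hi)⟩
    · rintro ⟨⟨d, hd, rfl⟩, hsupp⟩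
      refine ⟨d, ⟨hd, Fin.forall_fin_succ'.2 ⟨fun i hi => hsupp i (by simpa using hi), ?_⟩⟩, rfl⟩
      exact fun h => absurd (Finset.mem_insert_self _ _) h
  have hker : S ⊓ LinearMap.ker (LinearMap.funLeft k k Fin.castSucc) =
      K ⊓ span k {Pi.single (Fin.last n) 1} := by
    refine le_antisymm (fun c hc => ⟨hc.1.1, mem_span_singleton.2
      ⟨_, (eq_smul_single_last (congrFun hc.2)).symm⟩⟩) ?_
    rintro _ ⟨hc, h⟩
    obtain ⟨a, rfl⟩ := mem_span_singleton.1 h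
    refine ⟨mem_supportedOn.2 ⟨hc, fun i hi => ?_⟩, funext fun i => ?_⟩
    · have : i ≠ Fin.last n := by rintro rfl; simp at hi
      simp [this]
    · simp [LinearMap.funLeft_apply]
  have hrank : Module.finrank k ↥(K ⊓ span k {(Pi.single (Fin.last n) 1 : Fin (n + 1) → k)}) =
      if Pi.single (Fin.last n) 1 ∈ K then 1 else 0 := by
    split_ifs with hK
    · rw [inf_eq_right.2 ((span_singleton_le_iff_mem _ _).2 hK), finrank_span_singleton (by simp)]
    · rw [((disjoint_span_singleton' (by simp)).2 hK).eq_bot, finrank_bot]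
  rw [← finrank_map_add_finrank_inf_ker (LinearMap.funLeft k k Fin.castSucc) S, hmap, hker, hrank]

theorem finrank_supportedOn_map_castSuccEmb (K : Submodule k (Fin (n + 1) → k))
    (B : Finset (Fin n)) :
    Module.finrank k (supportedOn K (B.map Fin.castSuccEmb)) =
      Module.finrank k (supportedOn (shorten K) B) := by
  classical
  have h : supportedOn K (B.map Fin.castSuccEmb) =
      supportedOn (K ⊓ LinearMap.ker (LinearMap.proj (Fin.last n)))
        (insert (Fin.last n) (B.map Fin.castSuccEmb)) := by
    ext c
    simp only [mem_supportedOn, mem_inf, LinearMap.mem_ker, LinearMap.proj_apply,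
      Fin.forall_fin_succ', and_assoc]
    simp [and_comm]
  rw [h, finrank_supportedOn_insert_last, if_neg (by simp), add_zero, shorten]

end PunctureRank

section Tutte

variable {k R : Type*} [Field k] [CommRing R] {n : ℕ}

/-- The corank–nullity sum of a pair of subspaces of a coordinate space. When `K` consists of the
dependences of one vector configuration and `L` of the evaluations of another, the exponents are
the nullity of `A` in the first and the corank of `A` in the second. -/
noncomputable def tutteSum (K L : Submodule k (Fin n → k)) (x y : R) : R :=
  ∑ A : Finset (Fin n), (x - 1) ^ Module.finrank k (supportedOn L Aᶜ) *
    (y - 1) ^ Module.finrank k (supportedOn K A)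

open Classical in
theorem tutteSum_succ (K L : Submodule k (Fin (n + 1) → k)) (x y : R) :
    tutteSum K L x y =
      (x - 1) ^ (if Pi.single (Fin.last n) 1 ∈ L then 1 else 0) *
          tutteSum (shorten K) (puncture L) x y +
        (y - 1) ^ (if Pi.single (Fin.last n) 1 ∈ K then 1 else 0) *
          tutteSum (puncture K) (shorten L) x y := by
  simp only [tutteSum, Finset.mul_sum, ← Finset.sum_add_distrib]
  rw [sum_finset_fin_succ]
  refine Finset.sum_congr rfl fun B _ => ?_
  rw [compl_map_castSuccEmb, compl_insert_last_map_castSuccEmb]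
  simp only [finrank_supportedOn_insert_last, finrank_supportedOn_map_castSuccEmb, pow_add]
  ring

end Tutte

section Orthogonal

variable {k : Type*} [CommRing k] {n : ℕ}

/-- Orthogonality of two subspaces of a coordinate space for the dot product: the linear form of
the orthogonality between the vectors and the covectors of an oriented matroid perspective. -/
def DotOrthogonal (K L : Submodule k (Fin n → k)) : Prop :=
  ∀ c ∈ K, ∀ d ∈ L, c ⬝ᵥ d = 0

namespace DotOrthogonal

theorem symm {K L : Submodule k (Fin n → k)} (h : DotOrthogonal K L) : DotOrthogonal L K :=
  fun d hd c hc => (dotProduct_comm d c).trans (h c hc d hd)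

variable {K L : Submodule k (Fin (n + 1) → k)}

theorem shorten_puncture (h : DotOrthogonal K L) : DotOrthogonal (shorten K) (puncture L) := by
  rintro _ hc _ ⟨d, hd, rfl⟩
  obtain ⟨c, hcK, hlast, rfl⟩ := mem_shorten.1 hc
  simpa [dotProduct, Fin.sum_univ_castSucc, hlast] using h c hcK d hd

theorem puncture_shorten (h : DotOrthogonal K L) : DotOrthogonal (puncture K) (shorten L) :=
  h.symm.shorten_puncture.symm

theorem apply_last_eq_zero (h : DotOrthogonal K L) (hK : Pi.single (Fin.last n) 1 ∈ K)
    {d : Fin (n + 1) → k} (hd : d ∈ L) : d (Fin.last n) = 0 := by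
  simpa using h _ hK d hd

theorem single_last_notMem [Nontrivial k] (h : DotOrthogonal K L)
    (hK : Pi.single (Fin.last n) 1 ∈ K) : Pi.single (Fin.last n) 1 ∉ L :=
  fun hL => by simpa using h.apply_last_eq_zero hK hL

theorem shorten_eq_puncture (h : DotOrthogonal K L) (hK : Pi.single (Fin.last n) 1 ∈ K) :
    shorten L = puncture L :=
  (shorten_le_puncture L).antisymm <| by
    rintro _ ⟨d, hd, rfl⟩
    exact mem_shorten.2 ⟨d, hd, h.apply_last_eq_zero hK hd, rfl⟩

end DotOrthogonal

end Orthogonal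

section Activity

variable {𝕜 : Type*} [CommRing 𝕜] [LinearOrder 𝕜] {n : ℕ}

/-- The vector `c` becomes nonnegative once reoriented on `A`, and `a` is the smallest element of
its support. -/
def LeadsAt (A : Finset (Fin n)) (c : Fin n → 𝕜) (a : Fin n) : Prop :=
  (∀ i, 0 ≤ reorient c A i) ∧ 0 < reorient c A a ∧ ∀ i < a, c i = 0

/-- The active elements of a subspace `K` of a coordinate space with respect to the reorientation
on `A`. Taking for `K` the dependences of a vector configuration gives the orientation-active
elements, and taking the evaluations gives the dually orientation-active ones. -/
def activeSet (K : Submodule 𝕜 (Fin n → 𝕜)) (A : Finset (Fin n)) : Set (Fin n) :=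
  {a | ∃ c ∈ K, LeadsAt A c a}

/-- The active elements other than the last one, when the last coordinate is required to have the
sign of `s` or to vanish. For `s = 1` and `s = -1` this amounts to not reorienting, respectively
reorienting, the last element. -/
def signedActiveSet (K : Submodule 𝕜 (Fin (n + 1) → 𝕜)) (B : Finset (Fin n)) (s : 𝕜) :
    Set (Fin n) :=
  {a | ∃ c ∈ K, LeadsAt B (c ∘ Fin.castSucc) a ∧ 0 ≤ s * c (Fin.last n)}

theorem reorient_reorient {V : Type*} [AddCommGroup V] (v : Fin n → V) (A : Finset (Fin n)) :
    reorient (reorient v A) A = v := by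
  ext i
  by_cases hi : i ∈ A <;> simp [reorient, hi]

theorem reorient_eq_zero_iff {V : Type*} [AddCommGroup V] {v : Fin n → V} {A : Finset (Fin n)}
    {i : Fin n} : reorient v A i = 0 ↔ v i = 0 := by
  by_cases hi : i ∈ A <;> simp [reorient, hi]

theorem activeSet_shorten_subset_signedActiveSet {K : Submodule 𝕜 (Fin (n + 1) → 𝕜)}
    {B : Finset (Fin n)} {s : 𝕜} : activeSet (shorten K) B ⊆ signedActiveSet K B s := by
  rintro a ⟨_, hc, ha⟩
  obtain ⟨c, hcK, hlast, rfl⟩ := mem_shorten.1 hc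
  exact ⟨c, hcK, ha, by simp [hlast]⟩

theorem signedActiveSet_eq_shorten {K : Submodule 𝕜 (Fin (n + 1) → 𝕜)} {B : Finset (Fin n)}
    {s : 𝕜} (h : signedActiveSet K B s ⊆ activeSet (shorten K) B) :
    signedActiveSet K B s = activeSet (shorten K) B :=
  h.antisymm activeSet_shorten_subset_signedActiveSet

theorem castSucc_mem_activeSet_map {K : Submodule 𝕜 (Fin (n + 1) → 𝕜)} {B : Finset (Fin n)}
    {a : Fin n} :
    a.castSucc ∈ activeSet K (B.map Fin.castSuccEmb) ↔ a ∈ signedActiveSet K B 1 := by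
  refine exists_congr fun c => and_congr_right fun _ => ?_
  simp [LeadsAt, reorient, Fin.forall_fin_succ', (Fin.castSucc_lt_last a).not_gt, and_assoc,
    and_comm, and_left_comm]

variable [IsStrictOrderedRing 𝕜]

theorem castSucc_mem_activeSet_insert_last {K : Submodule 𝕜 (Fin (n + 1) → 𝕜)}
    {B : Finset (Fin n)} {a : Fin n} :
    a.castSucc ∈ activeSet K (insert (Fin.last n) (B.map Fin.castSuccEmb)) ↔
      a ∈ signedActiveSet K B (-1) := by
  refine exists_congr fun c => and_congr_right fun _ => ?_
  simp [LeadsAt, reorient, Fin.forall_fin_succ', (Fin.castSucc_lt_last a).not_gt, and_assoc,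
    and_comm, and_left_comm]

theorem LeadsAt.smul_add_smul {A : Finset (Fin n)} {c d : Fin n → 𝕜} {a b : Fin n}
    (hc : LeadsAt A c a) (hd : LeadsAt A d b) (hab : a ≤ b) {α β : 𝕜} (hα : 0 < α) (hβ : 0 ≤ β) :
    LeadsAt A (α • c + β • d) a := by
  have hreorient (i : Fin n) :
      reorient (α • c + β • d) A i = α * reorient c A i + β * reorient d A i := by
    by_cases hi : i ∈ A <;> simp [reorient, hi, add_comm]
  obtain ⟨hc_nonneg, hc_pos, hc_below⟩ := hc
  obtain ⟨hd_nonneg, -, hd_below⟩ := hd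
  refine ⟨fun i => ?_, ?_, fun i hi => ?_⟩
  · rw [hreorient]
    exact add_nonneg (mul_nonneg hα.le (hc_nonneg i)) (mul_nonneg hβ (hd_nonneg i))
  · rw [hreorient]
    exact add_pos_of_pos_of_nonneg (mul_pos hα hc_pos) (mul_nonneg hβ (hd_nonneg a))
  · simp [hc_below i hi, hd_below i (hi.trans_le hab)]

theorem LeadsAt.dotProduct_nonneg {A : Finset (Fin n)} {c d : Fin n → 𝕜} {a b : Fin n}
    (hc : LeadsAt A c a) (hd : LeadsAt A d b) : 0 ≤ c ⬝ᵥ d := by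
  refine Finset.sum_nonneg fun i _ => ?_
  have hreorient : reorient c A i * reorient d A i = c i * d i := by
    by_cases hi : i ∈ A <;> simp [reorient, hi]
  exact hreorient ▸ mul_nonneg (hc.1 i) (hd.1 i)

variable {K L : Submodule 𝕜 (Fin (n + 1) → 𝕜)} {B : Finset (Fin n)} {s : 𝕜}

theorem signedActiveSet_union_neg :
    signedActiveSet K B s ∪ signedActiveSet K B (-s) = activeSet (puncture K) B := by
  ext a
  constructor
  · rintro (⟨c, hc, ha, -⟩ | ⟨c, hc, ha, -⟩) <;> exact ⟨_, ⟨c, hc, rfl⟩, ha⟩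
  · rintro ⟨_, ⟨c, hc, rfl⟩, ha⟩
    refine (le_total 0 (s * c (Fin.last n))).imp (fun h => ⟨c, hc, ha, h⟩)
      fun h => ⟨c, hc, ha, ?_⟩
    rwa [neg_mul, neg_nonneg]

theorem mem_activeSet_shorten_of_leadsAt {c d : Fin (n + 1) → 𝕜} {a b : Fin n} (hcK : c ∈ K)
    (hdK : d ∈ K) (hc : LeadsAt B (c ∘ Fin.castSucc) a) (hd : LeadsAt B (d ∘ Fin.castSucc) b)
    (hab : a ≤ b) {α β : 𝕜} (hα : 0 < α) (hβ : 0 ≤ β)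
    (hlast : α * c (Fin.last n) + β * d (Fin.last n) = 0) : a ∈ activeSet (shorten K) B :=
  ⟨_, mem_shorten.2 ⟨α • c + β • d, K.add_mem (K.smul_mem α hcK) (K.smul_mem β hdK), hlast, rfl⟩,
    hc.smul_add_smul hd hab hα hβ⟩

/-- Two vectors with opposite last coordinates have a positive combination whose last coordinate
vanishes, and it leads at the smaller of their two leading elements. -/
theorem signedActiveSet_subset_or_neg_subset (K : Submodule 𝕜 (Fin (n + 1) → 𝕜))
    (B : Finset (Fin n)) (hs : s ≠ 0) :
    signedActiveSet K B s ⊆ activeSet (shorten K) B ∨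
      signedActiveSet K B (-s) ⊆ activeSet (shorten K) B := by
  by_contra! h
  obtain ⟨⟨a, ⟨c, hcK, hca, hc⟩, ha⟩, ⟨b, ⟨d, hdK, hdb, hd⟩, hb⟩⟩ :=
    h.imp not_subset.1 not_subset.1
  have hc_last : s * c (Fin.last n) ≠ 0 := fun h0 => ha
    ⟨_, mem_shorten.2 ⟨c, hcK, (mul_eq_zero.1 h0).resolve_left hs, rfl⟩, hca⟩
  have hd_last : -s * d (Fin.last n) ≠ 0 := fun h0 => hb
    ⟨_, mem_shorten.2 ⟨d, hdK, (mul_eq_zero.1 h0).resolve_left (neg_ne_zero.2 hs), rfl⟩, hdb⟩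
  have hc_pos := hc.lt_of_ne' hc_last
  have hd_pos := hd.lt_of_ne' hd_last
  rcases le_total a b with hab | hba
  · exact ha (mem_activeSet_shorten_of_leadsAt hcK hdK hca hdb hab hd_pos hc_pos.le (by ring))
  · exact hb (mem_activeSet_shorten_of_leadsAt hdK hcK hdb hca hba hc_pos hd_pos.le (by ring))

/-- If both last coordinates were nonzero, they would make the dot product positive. -/
theorem DotOrthogonal.signedActiveSet_subset_or_subset (h : DotOrthogonal K L)
    (B : Finset (Fin n)) (hs : s ≠ 0) :
    signedActiveSet K B s ⊆ activeSet (shorten K) B ∨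
      signedActiveSet L B s ⊆ activeSet (shorten L) B := by
  by_contra! hnot
  obtain ⟨⟨a, ⟨c, hcK, hca, hc⟩, ha⟩, ⟨b, ⟨d, hdL, hdb, hd⟩, hb⟩⟩ :=
    hnot.imp not_subset.1 not_subset.1
  have hinit : 0 ≤ (c ∘ Fin.castSucc) ⬝ᵥ (d ∘ Fin.castSucc) := hca.dotProduct_nonneg hdb
  have hsum : (c ∘ Fin.castSucc) ⬝ᵥ (d ∘ Fin.castSucc) + c (Fin.last n) * d (Fin.last n) = 0 := by
    simpa [dotProduct, Fin.sum_univ_castSucc] using h c hcK d hdL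
  have hprod : 0 ≤ c (Fin.last n) * d (Fin.last n) := by
    refine nonneg_of_mul_nonneg_right (a := s * s) ?_ (mul_self_pos.2 hs)
    linarith [mul_nonneg hc hd]
  rcases mul_eq_zero.1 (show c (Fin.last n) * d (Fin.last n) = 0 by linarith) with hlast | hlast
  · exact ha ⟨_, mem_shorten.2 ⟨c, hcK, hlast, rfl⟩, hca⟩
  · exact hb ⟨_, mem_shorten.2 ⟨d, hdL, hlast, rfl⟩, hdb⟩

theorem signedActiveSet_neg_eq_puncture (h : signedActiveSet K B s ⊆ activeSet (shorten K) B) :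
    signedActiveSet K B (-s) = activeSet (puncture K) B := by
  rw [← signedActiveSet_union_neg (s := s), union_eq_right.2
    (h.trans activeSet_shorten_subset_signedActiveSet)]

theorem DotOrthogonal.exists_sign_signedActiveSet_subset (h : DotOrthogonal K L)
    (B : Finset (Fin n)) :
    ∃ s : 𝕜, (s = 1 ∨ s = -1) ∧ signedActiveSet K B s ⊆ activeSet (shorten K) B ∧
      signedActiveSet L B (-s) ⊆ activeSet (shorten L) B := by
  have hK := signedActiveSet_subset_or_neg_subset K B one_ne_zero
  have hL := signedActiveSet_subset_or_neg_subset L B one_ne_zero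
  have hone := h.signedActiveSet_subset_or_subset B one_ne_zero
  have hneg := h.signedActiveSet_subset_or_subset B (neg_ne_zero.2 one_ne_zero)
  by_cases hK_one : signedActiveSet K B 1 ⊆ activeSet (shorten K) B
  · by_cases hL_neg : signedActiveSet L B (-1) ⊆ activeSet (shorten L) B
    · exact ⟨1, .inl rfl, hK_one, hL_neg⟩
    · refine ⟨-1, .inr rfl, hneg.resolve_right hL_neg, ?_⟩
      rw [neg_neg]
      exact hL.resolve_right hL_neg
  · refine ⟨-1, .inr rfl, hK.resolve_left hK_one, ?_⟩
    rw [neg_neg]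
    exact hone.resolve_left hK_one

end Activity

section ActivitySum

variable {𝕜 : Type*} [Field 𝕜] [LinearOrder 𝕜] [IsStrictOrderedRing 𝕜] {n : ℕ}

theorem last_mem_activeSet {K : Submodule 𝕜 (Fin (n + 1) → 𝕜)} {A : Finset (Fin (n + 1))} :
    Fin.last n ∈ activeSet K A ↔ Pi.single (Fin.last n) 1 ∈ K := by
  constructor
  · rintro ⟨c, hc, -, hlast, hbelow⟩
    exact single_last_mem_iff.2
      ⟨c, hc, mt reorient_eq_zero_iff.2 hlast.ne', fun i => hbelow _ (Fin.castSucc_lt_last i)⟩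
  · intro hK
    refine ⟨reorient (Pi.single (Fin.last n) 1) A, ?_, ?_, ?_, fun i hi => ?_⟩
    · rw [eq_smul_single_last (c := reorient _ A) fun i => reorient_eq_zero_iff.2 (by simp)]
      exact K.smul_mem _ hK
    · rw [reorient_reorient]
      exact Pi.single_nonneg.2 zero_le_one
    · simp [reorient_reorient]
    · rw [reorient_eq_zero_iff, Pi.single_eq_of_ne hi.ne]

open Classical in
theorem ncard_activeSet_map (K : Submodule 𝕜 (Fin (n + 1) → 𝕜)) (B : Finset (Fin n)) :
    (activeSet K (B.map Fin.castSuccEmb)).ncard = (signedActiveSet K B 1).ncard +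
      if Pi.single (Fin.last n) 1 ∈ K then 1 else 0 := by
  have h : Fin.castSucc ⁻¹' activeSet K (B.map Fin.castSuccEmb) = signedActiveSet K B 1 :=
    Set.ext fun _ => castSucc_mem_activeSet_map
  simp only [ncard_fin_succ, h, last_mem_activeSet]

open Classical in
theorem ncard_activeSet_insert_last (K : Submodule 𝕜 (Fin (n + 1) → 𝕜)) (B : Finset (Fin n)) :
    (activeSet K (insert (Fin.last n) (B.map Fin.castSuccEmb))).ncard =
      (signedActiveSet K B (-1)).ncard + if Pi.single (Fin.last n) 1 ∈ K then 1 else 0 := by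
  have h : Fin.castSucc ⁻¹' activeSet K (insert (Fin.last n) (B.map Fin.castSuccEmb)) =
      signedActiveSet K B (-1) :=
    Set.ext fun _ => castSucc_mem_activeSet_insert_last
  simp only [ncard_fin_succ, h, last_mem_activeSet]

variable {R : Type*} [CommRing R]

/-- The monomial recording the numbers of active elements of `L` and of `K` with respect to the
reorientation on `A`. -/
noncomputable def activityMonomial (K L : Submodule 𝕜 (Fin n → 𝕜)) (A : Finset (Fin n))
    (x y : R) : R :=
  x ^ (activeSet L A).ncard * y ^ (activeSet K A).ncard

open Classical in
theorem DotOrthogonal.activityMonomial_add {K L : Submodule 𝕜 (Fin (n + 1) → 𝕜)}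
    (h : DotOrthogonal K L) (B : Finset (Fin n)) (x y : R) :
    activityMonomial K L (B.map Fin.castSuccEmb) x y +
        activityMonomial K L (insert (Fin.last n) (B.map Fin.castSuccEmb)) x y =
      x ^ (if Pi.single (Fin.last n) 1 ∈ L then 1 else 0) *
        y ^ (if Pi.single (Fin.last n) 1 ∈ K then 1 else 0) *
        (activityMonomial (shorten K) (puncture L) B x y +
          activityMonomial (puncture K) (shorten L) B x y) := by
  obtain ⟨s, hs, hK, hL⟩ := h.exists_sign_signedActiveSet_subset B
  have hL_eq := signedActiveSet_neg_eq_puncture hL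
  rw [neg_neg] at hL_eq
  simp only [activityMonomial, ncard_activeSet_map, ncard_activeSet_insert_last, pow_add,
    ← signedActiveSet_eq_shorten hK, ← signedActiveSet_neg_eq_puncture hK,
    ← signedActiveSet_eq_shorten hL, ← hL_eq]
  rcases hs with rfl | rfl
  · ring
  · rw [neg_neg]
    ring

theorem DotOrthogonal.tutteSum_eq_sum_activityMonomial {K L : Submodule 𝕜 (Fin n → 𝕜)}
    (h : DotOrthogonal K L) (x y : R) :
    tutteSum K L (2 * x) (2 * y) = ∑ A, activityMonomial K L A x y := by
  classical
  induction n with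
  | zero =>
    simp [tutteSum, activityMonomial, Module.finrank_zero_of_subsingleton, Set.eq_empty_of_isEmpty]
  | succ n ih =>
    rw [tutteSum_succ, sum_finset_fin_succ]
    simp only [h.activityMonomial_add, ← Finset.mul_sum, Finset.sum_add_distrib,
      ← ih h.shorten_puncture, ← ih h.puncture_shorten]
    by_cases hK : Pi.single (Fin.last n) 1 ∈ K
    · simp only [if_pos hK, if_neg (h.single_last_notMem hK), h.shorten_eq_puncture hK,
        shorten_eq_puncture_of_single_last_mem hK]
      ring
    · by_cases hL : Pi.single (Fin.last n) 1 ∈ L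
      · simp only [if_neg hK, if_pos hL, h.symm.shorten_eq_puncture hL,
          shorten_eq_puncture_of_single_last_mem hL]
        ring
      · simp only [if_neg hK, if_neg hL]
        ring

end ActivitySum

section Configuration

variable {n : ℕ} {V W : Type*} [AddCommGroup V] [Module ℝ V] [AddCommGroup W] [Module ℝ W]

theorem dotOrthogonal_dependences_evaluations {k V W : Type*} [CommRing k]
    [AddCommGroup V] [Module k V] [AddCommGroup W] [Module k W] (v : Fin n → V) (π : V →ₗ[k] W) :
    DotOrthogonal (dependences k v) (evaluations k (π ∘ v)) := by
  rintro c hc _ ⟨f, rfl⟩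
  have h := congrArg (f ∘ₗ π) (mem_dependences.1 hc)
  simpa [dotProduct] using h

theorem oActive_reorient_iff {v : Fin n → V} {A : Finset (Fin n)} {a : Fin n} :
    OActive (reorient v A) a ↔ a ∈ activeSet (dependences ℝ v) A := by
  have hsum (c : Fin n → ℝ) : ∑ i, c i • reorient v A i = ∑ i, reorient c A i • v i := by
    refine Finset.sum_congr rfl fun i _ => ?_
    by_cases hi : i ∈ A <;> simp [reorient, hi]
  constructor
  · rintro ⟨c, hnonneg, hc, hpos, hbelow⟩
    refine ⟨reorient c A, (hsum c).symm.trans hc, ?_⟩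
    simpa only [LeadsAt, reorient_reorient, reorient_eq_zero_iff] using ⟨hnonneg, hpos, hbelow⟩
  · rintro ⟨c, hc, hnonneg, hpos, hbelow⟩
    refine ⟨reorient c A, hnonneg, ?_, hpos, fun i hi => reorient_eq_zero_iff.2 (hbelow i hi)⟩
    rw [hsum, reorient_reorient]
    exact hc

theorem oDualActive_reorient_iff {w : Fin n → W} {A : Finset (Fin n)} {a : Fin n} :
    ODualActive (reorient w A) a ↔ a ∈ activeSet (evaluations ℝ w) A := by
  have hmap (f : W →ₗ[ℝ] ℝ) (i : Fin n) :
      f (reorient w A i) = reorient (fun j => f (w j)) A i := by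
    by_cases hi : i ∈ A <;> simp [reorient, hi]
  simp only [ODualActive, hmap, reorient_eq_zero_iff]
  constructor
  · rintro ⟨f, hf⟩
    exact ⟨_, ⟨f, rfl⟩, hf⟩
  · rintro ⟨_, ⟨f, rfl⟩, hf⟩
    exact ⟨f, hf⟩

theorem tuttePerspV_eq_tutteSum (v : Fin n → V) (w : Fin n → W) (x y : ℝ) :
    tuttePerspV v w x y = tutteSum (dependences ℝ v) (evaluations ℝ w) x y := by
  refine Finset.sum_congr rfl fun A _ => ?_
  have hcorank := finrank_supportedOn_evaluations_add (k := ℝ) w A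
  have hnullity := finrank_supportedOn_dependences_add (k := ℝ) v A
  rw [vrank, vrank, vrank, image_univ, ← hcorank, ← hnullity, Nat.add_sub_cancel,
    Nat.add_sub_cancel]

theorem activityMonomial_dependences_evaluations (v : Fin n → V) (w : Fin n → W)
    (A : Finset (Fin n)) (x y : ℝ) :
    activityMonomial (dependences ℝ v) (evaluations ℝ w) A x y =
      x ^ oStarCount w A * y ^ oCount v A := by
  simp only [activityMonomial, oStarCount, oCount, oActive_reorient_iff, oDualActive_reorient_iff,
    ofPred_mem_eq]

theorem statement14_general (v : Fin n → V) (π : V →ₗ[ℝ] W) (x y : ℝ) :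
    tuttePerspV v (π ∘ v) (2 * x) (2 * y) =
      ∑ A : Finset (Fin n), x ^ oStarCount (π ∘ v) A * y ^ oCount v A := by
  rw [tuttePerspV_eq_tutteSum,
    (dotOrthogonal_dependences_evaluations v π).tutteSum_eq_sum_activityMonomial]
  simp only [activityMonomial_dependences_evaluations]

end Configuration

/-- 2-variable orientation-activity expansion for oriented matroid perspectives:
`t(M,M'; 2x, 2y, 1) = ∑_A x^o*_{M'}(A) · y^o_M(A)`. -/
theorem statement14 {n : ℕ} {V W : Type*} [AddCommGroup V] [Module ℝ V] [FiniteDimensional ℝ V]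
    [AddCommGroup W] [Module ℝ W] [FiniteDimensional ℝ W]
    (v : Fin n → V) (π : V →ₗ[ℝ] W) (x y : ℝ) :
    tuttePerspV v (π ∘ v) (2 * x) (2 * y) =
      ∑ A : Finset (Fin n), x ^ oStarCount (π ∘ v) A * y ^ oCount v A := by
  exact statement14_general v π x y
end

section
/- (Diagonal derivatives of the Tutte polynomial, realizable case.) For every vector configuration v : Fin n → V, every linear map π : V →ₗ[ℝ] W with v' = π ∘ v, every natural number p, and all real x: the p-th derivative d^p/dx^p of the one-variable polynomial x ↦ t(M,M';x,x,1), evaluated at x, equals p! · ∑_{A ⊆ Fin n with θ̄*_{M'}(A) + θ̄_M(A) = p} x^{θ*_{M'}(A) + θ_M(A)}. -/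
open Set Submodule

/-!
Let `K` be the space of linear dependences of `v` and `L` the space of values of linear functionals
on `v'`. Since `v' = π ∘ v`, they are orthogonal; this is all that the perspective `M → M'`
contributes. An element is active, or dually active, when it is the least element of the support of
a vector of `K`, or of `L`, with prescribed weak signs.

Delete or contract the greatest element `e`. Once a reorientation of the other elements is fixed,
the sets of active elements other than `e` under the two orientations of `e` are those of the
deletion and of the contraction of `e`: a vector positive at `e` and one negative at `e` can be
combined so as to avoid `e`, hence only one of the two orientations can create activities that are
not already in the deletion. By orthogonality, `K` and `L` cannot both gain activities from the
same orientation of `e`, so they realize deletion and contraction in opposite orders. The generating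
function of the four activity parameters therefore obeys the same deletion–contraction recursion as
the Tutte polynomial, which gives
`t(M,M';x+u,y+w,1) = ∑ x^θ*(A) u^θ̄*(A) y^θ(A) w^θ̄(A)`.
With `y = x` and `u = w = s - x` this is the Taylor expansion of `s ↦ t(M,M';s,s,1)` at `x`.
-/

namespace OrientedPerspective

section Conforms

variable {ι 𝕜 : Type*}

/-- The sign vector of `c` is compatible with the reorientation on `A`: `c` becomes nonnegative
once its coordinates in `A` are negated. -/
def Conforms [Zero 𝕜] [LE 𝕜] (A : Set ι) (c : ι → 𝕜) : Prop :=
  (∀ i ∈ A, c i ≤ 0) ∧ ∀ i ∉ A, 0 ≤ c i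

/-- `a` is the least element of the support of `c`. -/
def IsLeading [Zero 𝕜] [LT ι] (c : ι → 𝕜) (a : ι) : Prop :=
  c a ≠ 0 ∧ ∀ i < a, c i = 0

theorem IsLeading.smul [MulZeroClass 𝕜] [NoZeroDivisors 𝕜] [LT ι] {c : ι → 𝕜} {a : ι}
    (h : IsLeading c a) {r : 𝕜} (hr : r ≠ 0) : IsLeading (r • c) a :=
  ⟨mul_ne_zero hr h.1, fun i hi => by rw [Pi.smul_apply, h.2 i hi, smul_zero]⟩

theorem isLeading_single [Zero 𝕜] [Preorder ι] [DecidableEq ι] (i : ι) {r : 𝕜} (hr : r ≠ 0) :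
    IsLeading (Pi.single i r) i :=
  ⟨by rwa [Pi.single_eq_same], fun j hj => by rw [Pi.single_eq_of_ne hj.ne]⟩

variable [CommRing 𝕜] [LinearOrder 𝕜] [IsStrictOrderedRing 𝕜] {A : Set ι} {c d : ι → 𝕜}

theorem Conforms.add (hc : Conforms A c) (hd : Conforms A d) : Conforms A (c + d) :=
  ⟨fun i hi => add_nonpos (hc.1 i hi) (hd.1 i hi), fun i hi => add_nonneg (hc.2 i hi) (hd.2 i hi)⟩

theorem Conforms.smul (hc : Conforms A c) {r : 𝕜} (hr : 0 ≤ r) : Conforms A (r • c) :=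
  ⟨fun i hi => mul_nonpos_of_nonneg_of_nonpos hr (hc.1 i hi), fun i hi => mul_nonneg hr (hc.2 i hi)⟩

theorem Conforms.mul_apply_nonneg (hc : Conforms A c) (hd : Conforms A d) (i : ι) :
    0 ≤ c i * d i := by
  by_cases hi : i ∈ A
  · exact mul_nonneg_of_nonpos_of_nonpos (hc.1 i hi) (hd.1 i hi)
  · exact mul_nonneg (hc.2 i hi) (hd.2 i hi)

theorem Conforms.eq_zero_of_add_eq_zero (hc : Conforms A c) (hd : Conforms A d) {i : ι}
    (h : c i + d i = 0) : c i = 0 := by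
  by_cases hi : i ∈ A
  · linarith [hc.1 i hi, hd.1 i hi]
  · linarith [hc.2 i hi, hd.2 i hi]

theorem Conforms.isLeading_add [Preorder ι] (hc : Conforms A c) (hd : Conforms A d) {a b : ι}
    (ha : IsLeading c a) (hb : IsLeading d b) (hab : a ≤ b) : IsLeading (c + d) a :=
  ⟨fun h => ha.1 (hc.eq_zero_of_add_eq_zero hd h), fun i hi => by
    rw [Pi.add_apply, ha.2 i hi, hb.2 i (hi.trans_le hab), add_zero]⟩

theorem exists_conforms_single [DecidableEq ι] (A : Set ι) (i : ι) :
    ∃ r : 𝕜, r ≠ 0 ∧ Conforms A (Pi.single i r) := by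
  by_cases hi : i ∈ A
  · refine ⟨-1, neg_ne_zero.2 one_ne_zero, fun j _ => ?_, fun j hj => ?_⟩
    · rw [Pi.single_apply]
      split_ifs <;> simp
    · rw [Pi.single_eq_of_ne (ne_of_mem_of_not_mem hi hj).symm]
  · refine ⟨1, one_ne_zero, fun j hj => ?_, fun j _ => ?_⟩
    · rw [Pi.single_eq_of_ne (ne_of_mem_of_not_mem hj hi)]
    · rw [Pi.single_apply]
      split_ifs <;> simp

end Conforms

section LastCoordinate

variable {n : ℕ} {𝕜 : Type*} [CommRing 𝕜]

/-- The linear map forgetting the last coordinate. -/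
def initMap (𝕜 : Type*) [CommRing 𝕜] (n : ℕ) : (Fin (n + 1) → 𝕜) →ₗ[𝕜] Fin n → 𝕜 :=
  LinearMap.funLeft 𝕜 𝕜 Fin.castSucc

@[simp]
theorem initMap_apply (c : Fin (n + 1) → 𝕜) (i : Fin n) : initMap 𝕜 n c i = c i.castSucc :=
  rfl

/-- The contraction of the last element, at the level of the space `K` of vectors of an oriented
matroid. -/
def contractLast (K : Submodule 𝕜 (Fin (n + 1) → 𝕜)) : Submodule 𝕜 (Fin n → 𝕜) :=
  K.map (initMap 𝕜 n)

/-- The deletion of the last element, at the level of the space `K` of vectors of an oriented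
matroid: only the vectors avoiding that element remain. -/
def deleteLast (K : Submodule 𝕜 (Fin (n + 1) → 𝕜)) : Submodule 𝕜 (Fin n → 𝕜) :=
  contractLast (K ⊓ LinearMap.ker (LinearMap.proj (Fin.last n)))

theorem mem_deleteLast {K : Submodule 𝕜 (Fin (n + 1) → 𝕜)} {d : Fin n → 𝕜} :
    d ∈ deleteLast K ↔ ∃ c ∈ K, c (Fin.last n) = 0 ∧ initMap 𝕜 n c = d := by
  simp only [deleteLast, contractLast, Submodule.mem_map, Submodule.mem_inf, LinearMap.mem_ker,
    LinearMap.proj_apply, and_assoc]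

theorem isLeading_castSucc {c : Fin (n + 1) → 𝕜} {a : Fin n} :
    IsLeading c a.castSucc ↔ IsLeading (initMap 𝕜 n c) a := by
  simp [IsLeading, Fin.forall_fin_succ', (Fin.castSucc_lt_last a).not_gt]

theorem deleteLast_eq_contractLast_of_single_mem {K : Submodule 𝕜 (Fin (n + 1) → 𝕜)}
    (hK : Pi.single (Fin.last n) 1 ∈ K) :
    deleteLast K = contractLast K := by
  refine le_antisymm (Submodule.map_mono inf_le_left) ?_
  rintro _ ⟨c, hc, rfl⟩
  refine mem_deleteLast.2 ⟨c - c (Fin.last n) • Pi.single (Fin.last n) 1,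
    K.sub_mem hc (K.smul_mem _ hK), by simp, ?_⟩
  ext i
  simp

theorem ker_initMap : LinearMap.ker (initMap 𝕜 n) = span 𝕜 {Pi.single (Fin.last n) 1} := by
  ext c
  rw [LinearMap.mem_ker, Submodule.mem_span_singleton]
  constructor
  · intro hc
    refine ⟨c (Fin.last n), funext fun i => ?_⟩
    cases i using Fin.lastCases with
    | last => simp
    | cast i => simpa using (congrFun hc i).symm
  · rintro ⟨r, rfl⟩
    ext i
    simp

theorem spanSubset_eq_comap_initMap {S : Set (Fin (n + 1))} (hS : Fin.last n ∈ S) :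
    Pi.spanSubset 𝕜 S = (Pi.spanSubset 𝕜 (Fin.castSucc ⁻¹' S)).comap (initMap 𝕜 n) := by
  ext c
  simp only [Pi.mem_spanSubset_iff, Submodule.mem_comap, Fin.forall_fin_succ', initMap_apply,
    mem_preimage, hS, not_true_eq_false, false_implies, and_true]

end LastCoordinate

theorem last_notMem_image_castSucc {n : ℕ} (A : Set (Fin n)) :
    Fin.last n ∉ Fin.castSucc '' A := by
  simp [Fin.castSucc_ne_last]

section Activity

variable {n : ℕ} {𝕜 : Type*} [CommRing 𝕜] [LinearOrder 𝕜]
  {K : Submodule 𝕜 (Fin (n + 1) → 𝕜)} {A : Set (Fin n)}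

/-- The active elements of the oriented matroid with space of vectors `K` reoriented on `A`: the
least elements of the supports of the vectors of `K` that are compatible with `A`. -/
def activeSet (K : Submodule 𝕜 (Fin n → 𝕜)) (A : Set (Fin n)) : Set (Fin n) :=
  {a | ∃ c ∈ K, Conforms A c ∧ IsLeading c a}

/-- The elements other than the last one that are active by virtue of a vector of `K` whose last
coordinate lies in `s`. The choices `s = {0}` and `s = univ` compute the activities of the deletion
and of the contraction of the last element, `s = Ici 0` and `s = Iic 0` those of its two
reorientations. -/
def activeInit (K : Submodule 𝕜 (Fin (n + 1) → 𝕜)) (A : Set (Fin n)) (s : Set 𝕜) : Set (Fin n) :=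
  {a | ∃ c ∈ K, c (Fin.last n) ∈ s ∧ Conforms A (initMap 𝕜 n c) ∧ IsLeading (initMap 𝕜 n c) a}

theorem activeInit_mono (K : Submodule 𝕜 (Fin (n + 1) → 𝕜)) (A : Set (Fin n)) :
    Monotone (activeInit K A) :=
  fun _ _ hst _ ⟨c, hc, hs, h⟩ => ⟨c, hc, hst hs, h⟩

theorem activeInit_union (K : Submodule 𝕜 (Fin (n + 1) → 𝕜)) (A : Set (Fin n)) (s t : Set 𝕜) :
    activeInit K A (s ∪ t) = activeInit K A s ∪ activeInit K A t := by
  ext a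
  simp only [activeInit, mem_union, mem_ofPred_eq, or_and_right, and_or_left, exists_or]

theorem activeSet_contractLast (K : Submodule 𝕜 (Fin (n + 1) → 𝕜)) (A : Set (Fin n)) :
    activeSet (contractLast K) A = activeInit K A univ := by
  ext a
  simp [activeSet, activeInit, contractLast]

theorem activeSet_deleteLast (K : Submodule 𝕜 (Fin (n + 1) → 𝕜)) (A : Set (Fin n)) :
    activeSet (deleteLast K) A = activeInit K A {0} := by
  ext a
  simp [activeSet, activeInit, deleteLast, contractLast, and_assoc]

theorem activeInit_zero_eq_univ_of_single_mem (hK : Pi.single (Fin.last n) 1 ∈ K)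
    (A : Set (Fin n)) : activeInit K A {0} = activeInit K A univ := by
  rw [← activeSet_deleteLast, deleteLast_eq_contractLast_of_single_mem hK, activeSet_contractLast]

theorem conforms_image_castSucc {c : Fin (n + 1) → 𝕜} :
    Conforms (Fin.castSucc '' A) c ↔ 0 ≤ c (Fin.last n) ∧ Conforms A (initMap 𝕜 n c) := by
  simp only [Conforms, forall_mem_image, Fin.forall_fin_succ', initMap_apply,
    (Fin.castSucc_injective n).mem_set_image, last_notMem_image_castSucc, not_false_eq_true,
    forall_const]
  tauto

theorem conforms_insert_last {c : Fin (n + 1) → 𝕜} :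
    Conforms (insert (Fin.last n) (Fin.castSucc '' A)) c ↔
      c (Fin.last n) ≤ 0 ∧ Conforms A (initMap 𝕜 n c) := by
  simp only [Conforms, Fin.forall_fin_succ', initMap_apply, mem_insert_iff,
    (Fin.castSucc_injective n).mem_set_image, Fin.castSucc_ne_last, false_or, true_or,
    not_true_eq_false, false_implies, true_implies, and_true, and_assoc]
  exact and_left_comm

theorem preimage_activeSet_image_castSucc (K : Submodule 𝕜 (Fin (n + 1) → 𝕜)) (A : Set (Fin n)) :
    Fin.castSucc ⁻¹' activeSet K (Fin.castSucc '' A) = activeInit K A (Ici 0) := by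
  ext a
  simp only [activeSet, activeInit, mem_preimage, mem_ofPred_eq, conforms_image_castSucc,
    isLeading_castSucc, mem_Ici, and_assoc]

theorem preimage_activeSet_insert_last (K : Submodule 𝕜 (Fin (n + 1) → 𝕜)) (A : Set (Fin n)) :
    Fin.castSucc ⁻¹' activeSet K (insert (Fin.last n) (Fin.castSucc '' A)) =
      activeInit K A (Iic 0) := by
  ext a
  simp only [activeSet, activeInit, mem_preimage, mem_ofPred_eq, conforms_insert_last,
    isLeading_castSucc, mem_Iic, and_assoc]

variable [IsStrictOrderedRing 𝕜]

/-- Vector elimination: a positive combination of the two witnesses vanishes at the last element,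
and nothing else cancels because both conform to `A`. -/
theorem mem_activeInit_zero_or {a b : Fin n} (ha : a ∈ activeInit K A (Ici 0))
    (hb : b ∈ activeInit K A (Iic 0)) :
    a ∈ activeInit K A {0} ∨ b ∈ activeInit K A {0} := by
  obtain ⟨c, hcK, hc, hcA, hca⟩ := ha
  obtain ⟨d, hdK, hd, hdA, hdb⟩ := hb
  obtain hc | hc := (mem_Ici.1 hc).eq_or_lt
  · exact .inl ⟨c, hcK, hc.symm, hcA, hca⟩
  obtain hd | hd := (mem_Iic.1 hd).eq_or_lt
  · exact .inr ⟨d, hdK, hd, hdA, hdb⟩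
  set c' := (-d (Fin.last n)) • initMap 𝕜 n c
  set d' := c (Fin.last n) • initMap 𝕜 n d
  have hc'A : Conforms A c' := hcA.smul (neg_pos.2 hd).le
  have hd'A : Conforms A d' := hdA.smul hc.le
  have hc'a : IsLeading c' a := hca.smul (neg_pos.2 hd).ne'
  have hd'b : IsLeading d' b := hdb.smul hc.ne'
  have eliminant_mem {e : Fin n} (he : IsLeading (c' + d') e) : e ∈ activeInit K A {0} := by
    refine ⟨(-d (Fin.last n)) • c + c (Fin.last n) • d,
      K.add_mem (K.smul_mem _ hcK) (K.smul_mem _ hdK), ?_, ?_⟩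
    · simp [mul_comm]
    · simpa only [map_add, map_smul] using ⟨hc'A.add hd'A, he⟩
  obtain hab | hba := le_total a b
  · exact .inl (eliminant_mem (hc'A.isLeading_add hd'A hc'a hd'b hab))
  · exact .inr (eliminant_mem (add_comm c' d' ▸ hd'A.isLeading_add hc'A hd'b hc'a hba))

theorem activeInit_nested (K : Submodule 𝕜 (Fin (n + 1) → 𝕜)) (A : Set (Fin n)) :
    (activeInit K A (Ici 0) = activeInit K A {0} ∧
        activeInit K A (Iic 0) = activeInit K A univ) ∨
      (activeInit K A (Ici 0) = activeInit K A univ ∧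
        activeInit K A (Iic 0) = activeInit K A {0}) := by
  have zero_sub_nonneg : activeInit K A {0} ⊆ activeInit K A (Ici 0) :=
    activeInit_mono K A (by simp)
  have zero_sub_nonpos : activeInit K A {0} ⊆ activeInit K A (Iic 0) :=
    activeInit_mono K A (by simp)
  rw [← Iic_union_Ici (a := (0 : 𝕜)), activeInit_union]
  by_cases h : activeInit K A (Ici 0) ⊆ activeInit K A {0}
  · have hD := h.antisymm zero_sub_nonneg
    exact .inl ⟨hD, by rw [hD, union_eq_left.2 zero_sub_nonpos]⟩
  · obtain ⟨a, ha, ha'⟩ := not_subset.1 h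
    have hD : activeInit K A (Iic 0) = activeInit K A {0} :=
      Subset.antisymm (fun b hb => (mem_activeInit_zero_or ha hb).resolve_left ha') zero_sub_nonpos
    exact .inr ⟨by rw [hD, union_eq_right.2 zero_sub_nonneg], hD⟩

end Activity

theorem finrank_map_add_finrank_inf_ker {𝕜 V W : Type*} [Field 𝕜] [AddCommGroup V] [Module 𝕜 V]
    [FiniteDimensional 𝕜 V] [AddCommGroup W] [Module 𝕜 W] (f : V →ₗ[𝕜] W) (p : Submodule 𝕜 V) :
    Module.finrank 𝕜 ↥(p.map f) + Module.finrank 𝕜 ↥(p ⊓ LinearMap.ker f) =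
      Module.finrank 𝕜 p := by
  rw [← LinearMap.finrank_range_add_finrank_ker (f.domRestrict p), LinearMap.range_domRestrict,
    LinearMap.ker_domRestrict, ← Submodule.map_comap_subtype,
    (Submodule.equivSubtypeMap p _).finrank_eq]

section LastElement

variable {n : ℕ} {𝕜 : Type*} [Field 𝕜] {K : Submodule 𝕜 (Fin (n + 1) → 𝕜)}

theorem last_mem_activeSet_iff [LinearOrder 𝕜] [IsStrictOrderedRing 𝕜] {A : Set (Fin (n + 1))} :
    Fin.last n ∈ activeSet K A ↔ Pi.single (Fin.last n) 1 ∈ K := by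
  constructor
  · rintro ⟨c, hcK, -, hc, hlow⟩
    have hker : c ∈ LinearMap.ker (initMap 𝕜 n) :=
      LinearMap.mem_ker.2 (funext fun i => hlow _ (Fin.castSucc_lt_last i))
    rw [ker_initMap] at hker
    obtain ⟨r, rfl⟩ := Submodule.mem_span_singleton.1 hker
    have hr : r ≠ 0 := fun hr => hc (by simp [hr])
    exact (K.smul_mem_iff hr).1 hcK
  · intro hK
    obtain ⟨r, hr, hrA⟩ := exists_conforms_single (𝕜 := 𝕜) A (Fin.last n)
    refine ⟨Pi.single (Fin.last n) r, ?_, hrA, isLeading_single _ hr⟩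
    simpa only [← Pi.single_smul, smul_eq_mul, mul_one] using K.smul_mem r hK

/-- The indicator, in `{0, 1}`, that the last element is a loop of the oriented matroid with space
of vectors `K`. It is encoded as the dimension that `initMap` loses on `K`. -/
noncomputable def lastLoop (K : Submodule 𝕜 (Fin (n + 1) → 𝕜)) : ℕ :=
  Module.finrank 𝕜 ↥(K ⊓ LinearMap.ker (initMap 𝕜 n))

theorem lastLoop_of_single_mem (hK : Pi.single (Fin.last n) 1 ∈ K) : lastLoop K = 1 := by
  rw [lastLoop, ker_initMap, inf_eq_right.2 ((Submodule.span_singleton_le_iff_mem _ _).2 hK)]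
  exact finrank_span_singleton (by simp)

theorem lastLoop_of_single_notMem (hK : Pi.single (Fin.last n) 1 ∉ K) : lastLoop K = 0 := by
  rw [lastLoop, ker_initMap, (Submodule.disjoint_span_singleton_of_notMem hK).eq_bot,
    finrank_bot]

theorem finrank_inf_spanSubset_of_last_mem (K : Submodule 𝕜 (Fin (n + 1) → 𝕜))
    {S : Set (Fin (n + 1))} (hS : Fin.last n ∈ S) :
    Module.finrank 𝕜 ↥(K ⊓ Pi.spanSubset 𝕜 S) =
      Module.finrank 𝕜 ↥(contractLast K ⊓ Pi.spanSubset 𝕜 (Fin.castSucc ⁻¹' S)) + lastLoop K := by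
  have hker : LinearMap.ker (initMap 𝕜 n) ≤
      (Pi.spanSubset 𝕜 (Fin.castSucc ⁻¹' S)).comap (initMap 𝕜 n) :=
    Submodule.comap_mono bot_le
  rw [spanSubset_eq_comap_initMap hS, ← finrank_map_add_finrank_inf_ker (initMap 𝕜 n),
    ← Submodule.map_inf_eq_map_inf_comap, inf_assoc, inf_eq_right.2 hker, contractLast, lastLoop]

theorem finrank_inf_spanSubset_of_last_notMem (K : Submodule 𝕜 (Fin (n + 1) → 𝕜))
    {S : Set (Fin (n + 1))} (hS : Fin.last n ∉ S) :
    Module.finrank 𝕜 ↥(K ⊓ Pi.spanSubset 𝕜 S) =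
      Module.finrank 𝕜 ↥(deleteLast K ⊓ Pi.spanSubset 𝕜 (Fin.castSucc ⁻¹' S)) := by
  set K₀ := K ⊓ LinearMap.ker (LinearMap.proj (Fin.last n))
  have hK₀ : K ⊓ Pi.spanSubset 𝕜 S = K₀ ⊓ Pi.spanSubset 𝕜 (insert (Fin.last n) S) := by
    ext c
    simp only [K₀, Submodule.mem_inf, Pi.mem_spanSubset_iff, LinearMap.mem_ker,
      LinearMap.proj_apply, mem_insert_iff]
    grind
  have hpre : Fin.castSucc ⁻¹' insert (Fin.last n) S = Fin.castSucc ⁻¹' S := by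
    ext i
    simp [Fin.castSucc_ne_last]
  rw [hK₀, finrank_inf_spanSubset_of_last_mem K₀ (mem_insert _ _), hpre,
    lastLoop_of_single_notMem (by simp [K₀]), add_zero, deleteLast]

end LastElement

section Orthogonality

/-- Coordinatewise orthogonality. It is the relation between the space of vectors of `M` and the
space of covectors of `M'` in an oriented matroid perspective `M → M'`. -/
def Orthogonal {ι 𝕜 : Type*} [Fintype ι] [CommRing 𝕜] (K L : Submodule 𝕜 (ι → 𝕜)) : Prop :=
  ∀ c ∈ K, ∀ l ∈ L, c ⬝ᵥ l = 0

theorem Orthogonal.symm {ι 𝕜 : Type*} [Fintype ι] [CommRing 𝕜] {K L : Submodule 𝕜 (ι → 𝕜)}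
    (h : Orthogonal K L) : Orthogonal L K :=
  fun l hl c hc => dotProduct_comm c l ▸ h c hc l hl

variable {n : ℕ} {𝕜 : Type*} [CommRing 𝕜] {K L : Submodule 𝕜 (Fin (n + 1) → 𝕜)}

theorem dotProduct_eq_init_add_last (c l : Fin (n + 1) → 𝕜) :
    c ⬝ᵥ l = initMap 𝕜 n c ⬝ᵥ initMap 𝕜 n l + c (Fin.last n) * l (Fin.last n) :=
  Fin.sum_univ_castSucc _

theorem Orthogonal.deleteLast_contractLast (h : Orthogonal K L) :
    Orthogonal (deleteLast K) (contractLast L) := by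
  rintro _ hd _ ⟨l, hl, rfl⟩
  obtain ⟨c, hc, hlast, rfl⟩ := mem_deleteLast.1 hd
  simpa [dotProduct_eq_init_add_last, hlast] using h c hc l hl

theorem Orthogonal.contractLast_deleteLast (h : Orthogonal K L) :
    Orthogonal (contractLast K) (deleteLast L) :=
  h.symm.deleteLast_contractLast.symm

theorem Orthogonal.last_eq_zero (h : Orthogonal K L) (hK : Pi.single (Fin.last n) 1 ∈ K)
    {l : Fin (n + 1) → 𝕜} (hl : l ∈ L) : l (Fin.last n) = 0 := by
  simpa using h _ hK l hl

theorem Orthogonal.single_notMem [Nontrivial 𝕜] (h : Orthogonal K L)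
    (hK : Pi.single (Fin.last n) 1 ∈ K) : Pi.single (Fin.last n) 1 ∉ L :=
  fun hL => one_ne_zero (α := 𝕜) (by simpa using h.last_eq_zero hK hL)

theorem Orthogonal.deleteLast_eq_contractLast (h : Orthogonal K L)
    (hK : Pi.single (Fin.last n) 1 ∈ K) : deleteLast L = contractLast L := by
  rw [deleteLast, inf_eq_left.2 fun l hl => h.last_eq_zero hK hl]

variable [LinearOrder 𝕜]

theorem Orthogonal.activeInit_zero_eq_univ (h : Orthogonal K L)
    (hK : Pi.single (Fin.last n) 1 ∈ K) (A : Set (Fin n)) :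
    activeInit L A {0} = activeInit L A univ := by
  rw [← activeSet_deleteLast, h.deleteLast_eq_contractLast hK, activeSet_contractLast]

variable [IsStrictOrderedRing 𝕜]

/-- Otherwise some `c ∈ K` and `l ∈ L` conform to `A` and have the same nonzero sign at the last
element, so that their inner product is positive. -/
theorem Orthogonal.activeInit_subset_or (h : Orthogonal K L) {A : Set (Fin n)} {s : Set 𝕜}
    (hs : ∀ x ∈ s, ∀ y ∈ s, 0 ≤ x * y) :
    activeInit K A s ⊆ activeInit K A {0} ∨ activeInit L A s ⊆ activeInit L A {0} := by
  by_contra! hcon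
  obtain ⟨a, ⟨c, hcK, hc, hcA, hca⟩, ha⟩ := not_subset.1 hcon.1
  obtain ⟨b, ⟨l, hlL, hl, hlA, hlb⟩, hb⟩ := not_subset.1 hcon.2
  have hc0 : c (Fin.last n) ≠ 0 := fun hc0 => ha ⟨c, hcK, hc0, hcA, hca⟩
  have hl0 : l (Fin.last n) ≠ 0 := fun hl0 => hb ⟨l, hlL, hl0, hlA, hlb⟩
  have hinit : 0 ≤ initMap 𝕜 n c ⬝ᵥ initMap 𝕜 n l :=
    Finset.sum_nonneg fun i _ => hcA.mul_apply_nonneg hlA i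
  have hlast : 0 < c (Fin.last n) * l (Fin.last n) :=
    (hs _ hc _ hl).lt_of_ne' (mul_ne_zero hc0 hl0)
  exact (add_pos_of_nonneg_of_pos hinit hlast).ne'
    (dotProduct_eq_init_add_last c l ▸ h c hcK l hlL)

theorem Orthogonal.activeInit_complementary (h : Orthogonal K L) (A : Set (Fin n)) :
    (activeInit K A (Ici 0) = activeInit K A {0} ∧ activeInit K A (Iic 0) = activeInit K A univ ∧
        activeInit L A (Ici 0) = activeInit L A univ ∧
        activeInit L A (Iic 0) = activeInit L A {0}) ∨
      (activeInit K A (Ici 0) = activeInit K A univ ∧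
        activeInit K A (Iic 0) = activeInit K A {0} ∧
        activeInit L A (Ici 0) = activeInit L A {0} ∧
        activeInit L A (Iic 0) = activeInit L A univ) := by
  have hpos := h.activeInit_subset_or (A := A) (s := Ici 0) fun x hx y hy => mul_nonneg hx hy
  have hneg := h.activeInit_subset_or (A := A) (s := Iic 0) fun x hx y hy =>
    mul_nonneg_of_nonpos_of_nonpos hx hy
  have hsubK := activeInit_mono K A (subset_univ {0})
  have hsubL := activeInit_mono L A (subset_univ {0})
  -- If the two chains are ordered the same way, `hpos` or `hneg` shows that one is constant.
  rcases activeInit_nested K A with ⟨hK, hK'⟩ | ⟨hK, hK'⟩ <;>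
    rcases activeInit_nested L A with ⟨hL, hL'⟩ | ⟨hL, hL'⟩ <;>
    grind [Set.Subset.antisymm]

end Orthogonality

section GeneratingFunctions

open Classical in
/-- The product over `a ∈ S` of `u` if `a ∈ A` and of `x` if `a ∉ A`. -/
noncomputable def activityWeight {n : ℕ} {R : Type*} [CommMonoid R] (x u : R)
    (S A : Set (Fin n)) : R :=
  ∏ a, if a ∈ S then if a ∈ A then u else x else 1

open Classical in
theorem activityWeight_succ {n : ℕ} {R : Type*} [CommMonoid R] (x u : R)
    (S A : Set (Fin (n + 1))) :
    activityWeight x u S A =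
      activityWeight x u (Fin.castSucc ⁻¹' S) (Fin.castSucc ⁻¹' A) *
        if Fin.last n ∈ S then if Fin.last n ∈ A then u else x else 1 :=
  Fin.prod_univ_castSucc _

theorem activityWeight_eq_pow_mul_pow {n : ℕ} {R : Type*} [CommMonoid R] (x u : R)
    (S A : Set (Fin n)) :
    activityWeight x u S A = x ^ (S \ A).ncard * u ^ (S ∩ A).ncard := by
  classical
  have prod_eq_pow (T : Set (Fin n)) (z : R) : ∏ a, (if a ∈ T then z else 1) = z ^ T.ncard := by
    rw [← Finset.prod_filter, Finset.prod_const, ncard_eq_toFinset_card',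
      ← filter_mem_univ_eq_toFinset]
  rw [← prod_eq_pow, ← prod_eq_pow, ← Finset.prod_mul_distrib, activityWeight]
  refine Finset.prod_congr rfl fun a _ => ?_
  by_cases hS : a ∈ S <;> by_cases hA : a ∈ A <;> simp [hS, hA]

theorem sum_finset_fin_succ {n : ℕ} {M : Type*} [AddCommMonoid M]
    (f : Finset (Fin (n + 1)) → M) :
    ∑ B, f B = ∑ A : Finset (Fin n),
      (f (A.map Fin.castSuccEmb) + f (insert (Fin.last n) (A.map Fin.castSuccEmb))) := by
  rw [← Finset.powerset_univ, Fin.univ_castSuccEmb, Finset.cons_eq_insert,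
    Finset.sum_powerset_insert (by simp [Fin.castSucc_ne_last]), ← Finset.sum_add_distrib,
    ← Finset.powerset_univ, Finset.map_eq_image, Finset.powerset_image,
    Finset.sum_image (Finset.image_injective (Fin.castSuccEmb).injective).injOn]
  simp only [Finset.map_eq_image]

variable {n : ℕ} {𝕜 R : Type*} [Field 𝕜] [CommRing R]

/-- The generating function of the activities of the pair formed by an oriented matroid with space
of vectors `K` and one with space of covectors `L`: summing over the reorientations `A`, the
variables `y`, `w` record the active elements outside and inside `A`, and `x`, `u` record the dually
active ones. -/
noncomputable def activitySum [LinearOrder 𝕜] (x u y w : R) (K L : Submodule 𝕜 (Fin n → 𝕜)) : R :=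
  ∑ A : Finset (Fin n),
    activityWeight x u (activeSet L A) A * activityWeight y w (activeSet K A) A

/-- The corank-nullity generating function of the same pair: `L ⊓ Pi.spanSubset 𝕜 Aᶜ` is the space
of covectors vanishing on `A`, of dimension the corank of `A`, and `K ⊓ Pi.spanSubset 𝕜 A` is the
space of vectors supported in `A`, of dimension the nullity of `A`. -/
noncomputable def rankSum (X Y : R) (K L : Submodule 𝕜 (Fin n → 𝕜)) : R :=
  ∑ A : Finset (Fin n), X ^ Module.finrank 𝕜 ↥(L ⊓ Pi.spanSubset 𝕜 (A : Set (Fin n))ᶜ) *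
    Y ^ Module.finrank 𝕜 ↥(K ⊓ Pi.spanSubset 𝕜 (A : Set (Fin n)))

theorem preimage_castSucc_insert_last (A : Set (Fin n)) :
    Fin.castSucc ⁻¹' insert (Fin.last n) (Fin.castSucc '' A) = A := by
  ext i
  simp [Fin.castSucc_ne_last]

theorem rankSum_succ (X Y : R) (K L : Submodule 𝕜 (Fin (n + 1) → 𝕜)) :
    rankSum X Y K L = X ^ lastLoop L * rankSum X Y (deleteLast K) (contractLast L) +
      Y ^ lastLoop K * rankSum X Y (contractLast K) (deleteLast L) := by
  rw [rankSum, sum_finset_fin_succ, Finset.sum_add_distrib, rankSum, rankSum, Finset.mul_sum,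
    Finset.mul_sum]
  congr 1 <;> refine Finset.sum_congr rfl fun A _ => ?_
  · have hlast : Fin.last n ∉ Fin.castSucc '' (A : Set (Fin n)) := last_notMem_image_castSucc _
    rw [Finset.coe_map, Fin.coe_castSuccEmb, finrank_inf_spanSubset_of_last_notMem K hlast,
      finrank_inf_spanSubset_of_last_mem L (mem_compl hlast), preimage_compl,
      preimage_image_eq _ (Fin.castSucc_injective n), pow_add]
    ring
  · have hlast : Fin.last n ∈ insert (Fin.last n) (Fin.castSucc '' (A : Set (Fin n))) :=
      mem_insert _ _
    rw [Finset.coe_insert, Finset.coe_map, Fin.coe_castSuccEmb,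
      finrank_inf_spanSubset_of_last_mem K hlast,
      finrank_inf_spanSubset_of_last_notMem L (notMem_compl_iff.2 hlast), preimage_compl,
      preimage_castSucc_insert_last, pow_add]
    ring

variable [LinearOrder 𝕜] [IsStrictOrderedRing 𝕜]

open Classical in
theorem activityWeight_activeSet_image_castSucc (x u : R) (K : Submodule 𝕜 (Fin (n + 1) → 𝕜))
    (A : Set (Fin n)) :
    activityWeight x u (activeSet K (Fin.castSucc '' A)) (Fin.castSucc '' A) =
      activityWeight x u (activeInit K A (Ici 0)) A *
        if Pi.single (Fin.last n) 1 ∈ K then x else 1 := by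
  rw [activityWeight_succ, preimage_activeSet_image_castSucc,
    preimage_image_eq _ (Fin.castSucc_injective n), last_mem_activeSet_iff,
    if_neg (last_notMem_image_castSucc A)]

open Classical in
theorem activityWeight_activeSet_insert_last (x u : R) (K : Submodule 𝕜 (Fin (n + 1) → 𝕜))
    (A : Set (Fin n)) :
    activityWeight x u (activeSet K (insert (Fin.last n) (Fin.castSucc '' A)))
        (insert (Fin.last n) (Fin.castSucc '' A)) =
      activityWeight x u (activeInit K A (Iic 0)) A *
        if Pi.single (Fin.last n) 1 ∈ K then u else 1 := by
  rw [activityWeight_succ, preimage_activeSet_insert_last, preimage_castSucc_insert_last,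
    last_mem_activeSet_iff, if_pos (mem_insert _ _)]

theorem activitySum_succ (x u y w : R) {K L : Submodule 𝕜 (Fin (n + 1) → 𝕜)}
    (h : Orthogonal K L) :
    activitySum x u y w K L =
      (x + u - 1) ^ lastLoop L * activitySum x u y w (deleteLast K) (contractLast L) +
        (y + w - 1) ^ lastLoop K * activitySum x u y w (contractLast K) (deleteLast L) := by
  simp only [activitySum, sum_finset_fin_succ (n := n), Finset.mul_sum, ← Finset.sum_add_distrib]
  refine Finset.sum_congr rfl fun A _ => ?_
  simp only [Finset.coe_insert, Finset.coe_map, Fin.coe_castSuccEmb,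
    activityWeight_activeSet_image_castSucc, activityWeight_activeSet_insert_last]
  by_cases hK : Pi.single (Fin.last n) 1 ∈ K
  · have hL := h.single_notMem hK
    rw [if_pos hK, if_pos hK, if_neg hL, if_neg hL, lastLoop_of_single_mem hK,
      lastLoop_of_single_notMem hL, activeSet_deleteLast, activeSet_deleteLast,
      activeSet_contractLast, activeSet_contractLast]
    rcases h.activeInit_complementary A with ⟨h₁, h₂, h₃, h₄⟩ | ⟨h₁, h₂, h₃, h₄⟩ <;>
      rw [h₁, h₂, h₃, h₄, activeInit_zero_eq_univ_of_single_mem hK,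
        h.activeInit_zero_eq_univ hK] <;> ring
  by_cases hL : Pi.single (Fin.last n) 1 ∈ L
  · rw [if_pos hL, if_pos hL, if_neg hK, if_neg hK, lastLoop_of_single_mem hL,
      lastLoop_of_single_notMem hK, activeSet_deleteLast, activeSet_deleteLast,
      activeSet_contractLast, activeSet_contractLast]
    rcases h.activeInit_complementary A with ⟨h₁, h₂, h₃, h₄⟩ | ⟨h₁, h₂, h₃, h₄⟩ <;>
      rw [h₁, h₂, h₃, h₄, activeInit_zero_eq_univ_of_single_mem hL,
        h.symm.activeInit_zero_eq_univ hL] <;> ring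
  simp only [if_neg hK, if_neg hL, lastLoop_of_single_notMem hK, lastLoop_of_single_notMem hL,
    activeSet_deleteLast, activeSet_contractLast]
  rcases h.activeInit_complementary A with ⟨h₁, h₂, h₃, h₄⟩ | ⟨h₁, h₂, h₃, h₄⟩ <;>
    rw [h₁, h₂, h₃, h₄] <;> ring

theorem activitySum_eq_rankSum (x u y w : R) {K L : Submodule 𝕜 (Fin n → 𝕜)}
    (h : Orthogonal K L) :
    activitySum x u y w K L = rankSum (x + u - 1) (y + w - 1) K L := by
  induction n with
  | zero => simp [activitySum, rankSum, activityWeight, Module.finrank_zero_of_subsingleton]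
  | succ n ih =>
    rw [activitySum_succ x u y w h, rankSum_succ, ih h.deleteLast_contractLast,
      ih h.contractLast_deleteLast]

end GeneratingFunctions

section Configurations

variable {ι 𝕜 V W : Type*} [Field 𝕜] [AddCommGroup V] [Module 𝕜 V] [AddCommGroup W] [Module 𝕜 W]

/-- The linear dependences of the configuration `v`: the space of vectors of its oriented
matroid. -/
def dependenceSpace (𝕜 : Type*) [Field 𝕜] [Module 𝕜 V] [Fintype ι] (v : ι → V) :
    Submodule 𝕜 (ι → 𝕜) :=
  LinearMap.ker (Fintype.linearCombination 𝕜 v)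

/-- The values of linear functionals on the configuration `v`: the space of covectors of its
oriented matroid. -/
def evaluationSpace (𝕜 : Type*) [Field 𝕜] [Module 𝕜 V] (v : ι → V) : Submodule 𝕜 (ι → 𝕜) :=
  LinearMap.range (LinearMap.pi fun i => Module.Dual.eval 𝕜 V (v i))

theorem mem_dependenceSpace [Fintype ι] {v : ι → V} {c : ι → 𝕜} :
    c ∈ dependenceSpace 𝕜 v ↔ ∑ i, c i • v i = 0 :=
  Iff.rfl

theorem mem_evaluationSpace {v : ι → V} {c : ι → 𝕜} :
    c ∈ evaluationSpace 𝕜 v ↔ ∃ f : V →ₗ[𝕜] 𝕜, f ∘ v = c :=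
  Iff.rfl

theorem orthogonal_dependenceSpace_evaluationSpace [Fintype ι] (v : ι → V) (π : V →ₗ[𝕜] W) :
    Orthogonal (dependenceSpace 𝕜 v) (evaluationSpace 𝕜 (π ∘ v)) := by
  rintro c hc _ ⟨f, rfl⟩
  calc ∑ i, c i * f (π (v i)) = f (π (∑ i, c i • v i)) := by simp
    _ = 0 := by rw [mem_dependenceSpace.1 hc, map_zero, map_zero]

theorem map_linearCombination_spanSubset [Fintype ι] (v : ι → V) (A : Set ι) :
    (Pi.spanSubset 𝕜 A).map (Fintype.linearCombination 𝕜 v) = span 𝕜 (v '' A) := by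
  classical
  rw [Pi.spanSubset, Submodule.map_span, image_image]
  simp

theorem finrank_span_add_finrank_dependenceSpace_inf [Fintype ι] (v : ι → V) (A : Set ι) :
    Module.finrank 𝕜 ↥(span 𝕜 (v '' A)) +
      Module.finrank 𝕜 ↥(dependenceSpace 𝕜 v ⊓ Pi.spanSubset 𝕜 A) = A.ncard := by
  rw [← map_linearCombination_spanSubset, dependenceSpace, inf_comm,
    finrank_map_add_finrank_inf_ker, Pi.dim_spanSubset]

theorem finrank_evaluationSpace [Finite ι] (v : ι → V) :
    Module.finrank 𝕜 (evaluationSpace 𝕜 v) = Module.finrank 𝕜 ↥(span 𝕜 (range v)) := by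
  classical
  have := Fintype.ofFinite ι
  have evaluationSpace_eq : evaluationSpace 𝕜 v =
      (LinearMap.range (Fintype.linearCombination 𝕜 v).dualMap).map
        (LinearEquiv.piRing 𝕜 𝕜 ι 𝕜).toLinearMap := by
    rw [← LinearMap.range_comp]
    congr 1
    ext f
    simp
  rw [evaluationSpace_eq, LinearEquiv.finrank_map_eq,
    LinearMap.finrank_range_dualMap_eq_finrank_range, Fintype.range_linearCombination]

theorem map_funLeft_evaluationSpace (v : ι → V) (A : Set ι) :
    (evaluationSpace 𝕜 v).map (LinearMap.funLeft 𝕜 𝕜 ((↑) : A → ι)) =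
      evaluationSpace 𝕜 (v ∘ ((↑) : A → ι)) := by
  rw [evaluationSpace, ← LinearMap.range_comp]
  rfl

theorem ker_funLeft_subtype [Finite ι] (A : Set ι) :
    LinearMap.ker (LinearMap.funLeft 𝕜 𝕜 ((↑) : A → ι)) = Pi.spanSubset 𝕜 Aᶜ := by
  ext c
  simp [Pi.mem_spanSubset_iff, funext_iff]

theorem finrank_span_add_finrank_evaluationSpace_inf [Finite ι] (v : ι → V) (A : Set ι) :
    Module.finrank 𝕜 ↥(span 𝕜 (v '' A)) +
      Module.finrank 𝕜 ↥(evaluationSpace 𝕜 v ⊓ Pi.spanSubset 𝕜 Aᶜ) =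
        Module.finrank 𝕜 ↥(span 𝕜 (range v)) := by
  have rank_nullity := finrank_map_add_finrank_inf_ker (LinearMap.funLeft 𝕜 𝕜 ((↑) : A → ι))
    (evaluationSpace 𝕜 v)
  rwa [map_funLeft_evaluationSpace, ker_funLeft_subtype, finrank_evaluationSpace,
    finrank_evaluationSpace, range_comp, Subtype.range_coe] at rank_nullity

end Configurations

section Reorientations

variable {n : ℕ} {V W : Type*} [AddCommGroup V] [AddCommGroup W]

theorem reorient_reorient (v : Fin n → V) (A : Finset (Fin n)) :
    reorient (reorient v A) A = v := by
  funext i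
  by_cases hi : i ∈ A <;> simp [reorient, hi]

theorem reorient_apply_eq_zero {v : Fin n → V} {A : Finset (Fin n)} {i : Fin n} :
    reorient v A i = 0 ↔ v i = 0 := by
  by_cases hi : i ∈ A <;> simp [reorient, hi]

variable [Module ℝ V] [Module ℝ W]

theorem map_reorient (f : V →ₗ[ℝ] W) (v : Fin n → V) (A : Finset (Fin n)) (i : Fin n) :
    f (reorient v A i) = reorient (f ∘ v) A i := by
  by_cases hi : i ∈ A <;> simp [reorient, hi]

theorem smul_reorient (c : Fin n → ℝ) (v : Fin n → V) (A : Finset (Fin n)) (i : Fin n) :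
    c i • reorient v A i = reorient c A i • v i := by
  by_cases hi : i ∈ A <;> simp [reorient, hi]

theorem conforms_and_isLeading_iff {c : Fin n → ℝ} {A : Finset (Fin n)} {a : Fin n} :
    Conforms ↑A c ∧ IsLeading c a ↔
      (∀ i, 0 ≤ reorient c A i) ∧ 0 < reorient c A a ∧ ∀ i < a, reorient c A i = 0 := by
  have conforms_iff : Conforms ↑A c ↔ ∀ i, 0 ≤ reorient c A i := by
    simp only [Conforms, ← forall_and]
    refine forall_congr' fun i => ?_
    by_cases hi : i ∈ A <;> simp [reorient, hi]
  simp only [conforms_iff, IsLeading, reorient_apply_eq_zero]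
  refine and_congr_right fun hc => and_congr_left fun _ => ?_
  rw [(hc a).lt_iff_ne', ne_eq, ne_eq, reorient_apply_eq_zero]

theorem oActive_reorient_iff {v : Fin n → V} {A : Finset (Fin n)} {a : Fin n} :
    OActive (reorient v A) a ↔ a ∈ activeSet (dependenceSpace ℝ v) A := by
  have reorient_surjective : Function.Surjective fun c : Fin n → ℝ => reorient c A :=
    fun c => ⟨reorient c A, reorient_reorient c A⟩
  rw [OActive, reorient_surjective.exists]
  simp only [activeSet, mem_ofPred_eq, conforms_and_isLeading_iff, mem_dependenceSpace,
    smul_reorient, reorient_reorient]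
  exact exists_congr fun c => and_left_comm

theorem oDualActive_reorient_iff {v : Fin n → V} {A : Finset (Fin n)} {a : Fin n} :
    ODualActive (reorient v A) a ↔ a ∈ activeSet (evaluationSpace ℝ v) A := by
  simp only [ODualActive, activeSet, mem_ofPred_eq, mem_evaluationSpace, exists_exists_eq_and,
    conforms_and_isLeading_iff, map_reorient]

theorem activityWeight_dependenceSpace (y w : ℝ) (v : Fin n → V) (A : Finset (Fin n)) :
    activityWeight y w (activeSet (dependenceSpace ℝ v) A) A =
      y ^ theta v A * w ^ thetaBar v A := by
  simp only [activityWeight_eq_pow_mul_pow, theta, thetaBar, oActive_reorient_iff, sdiff_eq,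
    inter_def, mem_compl_iff, SetLike.mem_coe, and_comm]

theorem activityWeight_evaluationSpace (x u : ℝ) (v : Fin n → V) (A : Finset (Fin n)) :
    activityWeight x u (activeSet (evaluationSpace ℝ v) A) A =
      x ^ thetaStar v A * u ^ thetaStarBar v A := by
  simp only [activityWeight_eq_pow_mul_pow, thetaStar, thetaStarBar, oDualActive_reorient_iff,
    sdiff_eq, inter_def, mem_compl_iff, SetLike.mem_coe, and_comm]

theorem tuttePerspV_eq_rankSum (v : Fin n → V) (v' : Fin n → W) (x y : ℝ) :
    tuttePerspV v v' x y =
      rankSum (x - 1) (y - 1) (dependenceSpace ℝ v) (evaluationSpace ℝ v') := by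
  refine Finset.sum_congr rfl fun A _ => ?_
  have hcorank := finrank_span_add_finrank_evaluationSpace_inf (𝕜 := ℝ) v' A
  have hnullity := finrank_span_add_finrank_dependenceSpace_inf (𝕜 := ℝ) v A
  rw [vrank, vrank, vrank, image_univ, ← hcorank, ← ncard_coe_finset, ← hnullity,
    Nat.add_sub_cancel_left, Nat.add_sub_cancel_left]

theorem tuttePerspV_add_add (v : Fin n → V) (π : V →ₗ[ℝ] W) (x u y w : ℝ) :
    tuttePerspV v (π ∘ v) (x + u) (y + w) =
      ∑ A : Finset (Fin n), x ^ thetaStar (π ∘ v) A * u ^ thetaStarBar (π ∘ v) A *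
        (y ^ theta v A * w ^ thetaBar v A) := by
  rw [tuttePerspV_eq_rankSum,
    ← activitySum_eq_rankSum x u y w (orthogonal_dependenceSpace_evaluationSpace v π), activitySum]
  simp only [activityWeight_dependenceSpace, activityWeight_evaluationSpace]

end Reorientations

theorem iteratedDeriv_sum_mul_sub_pow {ι 𝕜 : Type*} [NontriviallyNormedField 𝕜] (S : Finset ι)
    (b : ι → 𝕜) (m : ι → ℕ) (p : ℕ) (x : 𝕜) :
    iteratedDeriv p (fun s => ∑ i ∈ S, b i * (s - x) ^ m i) x =
      p.factorial * ∑ i ∈ S with m i = p, b i := by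
  rw [iteratedDeriv_fun_sum fun i _ => by fun_prop, Finset.sum_filter, Finset.mul_sum]
  refine Finset.sum_congr rfl fun i _ => ?_
  rw [iteratedDeriv_const_mul_field, iteratedDeriv_comp_sub_const p (fun z : 𝕜 => z ^ m i) x]
  simp only [sub_self, iteratedDeriv_fun_pow_zero, eq_comm (a := p)]
  split_ifs with hp
  · rw [hp, mul_comm]
  · rw [Nat.cast_zero, mul_zero, mul_zero]

end OrientedPerspective

open OrientedPerspective in
theorem statement17_general {n : ℕ} {V W : Type*} [AddCommGroup V] [Module ℝ V]
    [AddCommGroup W] [Module ℝ W] (v : Fin n → V) (π : V →ₗ[ℝ] W) (p : ℕ) (x : ℝ) :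
    iteratedDeriv p (fun s => tuttePerspV v (π ∘ v) s s) x =
      (p.factorial : ℝ) *
        ∑ A ∈ Finset.univ.filter
          (fun A : Finset (Fin n) => thetaStarBar (π ∘ v) A + thetaBar v A = p),
          x ^ (thetaStar (π ∘ v) A + theta v A) := by
  rw [← iteratedDeriv_sum_mul_sub_pow]
  congr 1
  ext s
  calc tuttePerspV v (π ∘ v) s s
      = tuttePerspV v (π ∘ v) (x + (s - x)) (x + (s - x)) := by rw [add_sub_cancel]
    _ = _ := tuttePerspV_add_add v π x (s - x) x (s - x)
    _ = _ := Finset.sum_congr rfl fun A _ => by rw [pow_add, pow_add, mul_mul_mul_comm]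

/-- the `p`-th derivative of the one-variable polynomial `x ↦ t(M,M';x,x,1)` is
the generating function `p! · ∑_{θ̄*_{M'}(A) + θ̄_M(A) = p} x^(θ*_{M'}(A) + θ_M(A))`. -/
theorem statement17 {n : ℕ} {V W : Type*} [AddCommGroup V] [Module ℝ V] [FiniteDimensional ℝ V]
    [AddCommGroup W] [Module ℝ W] [FiniteDimensional ℝ W]
    (v : Fin n → V) (π : V →ₗ[ℝ] W) (p : ℕ) (x : ℝ) :
    iteratedDeriv p (fun s => tuttePerspV v (π ∘ v) s s) x =
      (p.factorial : ℝ) *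
        ∑ A ∈ Finset.univ.filter
          (fun A : Finset (Fin n) => thetaStarBar (π ∘ v) A + thetaBar v A = p),
          x ^ (thetaStar (π ∘ v) A + theta v A) :=
  statement17_general v π p x
end

section
/- (Propagation of activity agreement under deletion, realizable case.) Let n ≥ 1, let e be the greatest element of Fin n, and let v : Fin n → V be a vector configuration. If there exists b ≠ e such that [b is active for v] is not equivalent to [b is active for -_e v], while [b is active for v] is equivalent to [b is active for v\e], then for every a ≠ e, [a is active for v] is equivalent to [a is active for v\e]. -/
open Set Submodule

/-- `a` is active for the configuration `w` on the finite linearly ordered index set `I`: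
`a` is the smallest element of a positive circuit, i.e. there is a nonnegative linear
dependence with positive coefficient at `a` and zero coefficients below `a`. -/
def ActiveI {I : Type*} [Fintype I] [LinearOrder I] {U : Type*} [AddCommGroup U] [Module ℝ U]
    (w : I → U) (a : I) : Prop :=
  ∃ c : I → ℝ, (∀ i, 0 ≤ c i) ∧ (∑ i, c i • w i) = 0 ∧ 0 < c a ∧ ∀ i < a, c i = 0

/-- `a` is dually active for the configuration `w`: `a` is the smallest element of a positive
cocircuit, i.e. there is a linear functional, nonnegative on the configuration, positive at
`w a` and vanishing on the vectors below `a`. -/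
def DualActiveI {I : Type*} [Fintype I] [LinearOrder I] {U : Type*} [AddCommGroup U] [Module ℝ U]
    (w : I → U) (a : I) : Prop :=
  ∃ f : U →ₗ[ℝ] ℝ, (∀ i, 0 ≤ f (w i)) ∧ 0 < f (w a) ∧ ∀ i < a, f (w i) = 0

/-- The reorientation of the configuration `w` at the single element `e`. -/
def reorientAt {I : Type*} [DecidableEq I] {U : Type*} [AddCommGroup U]
    (w : I → U) (e : I) : I → U :=
  fun i => if i = e then -w i else w i

/-!
A positive dependence of `v` or of `-_e v` with zero coefficient at `e` is one of `v \ e`. A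
positive dependence of `v` and one of `-_e v`, both with positive coefficient at `e`, combine to a
positive dependence of `v \ e`: scale them so that the `v e` terms cancel, and add. No other terms
cancel, so the smallest index of the sum is the smaller of the two smallest indices. Hence if `a`
is active for `v` and `b` is active for `-_e v`, then `a` or `b` is active for `v \ e`. The
hypotheses on `b` say that it is active for `-_e v` but not for `v \ e`.
-/

/-- The deletion `w \ e`: the restriction of the configuration `w` to the indices other than `e`.
It is reducible, so that it is interchangeable with the explicit lambda. -/
abbrev deletion {I U : Type*} (w : I → U) (e : I) : {i : I // i ≠ e} → U :=
  fun i => w i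

lemma deletion_reorientAt {I U : Type*} [DecidableEq I] [AddCommGroup U] (v : I → U) (e : I) :
    deletion (reorientAt v e) e = deletion v e :=
  funext fun i => if_neg i.2

lemma sum_deletion_of_sum_eq_zero {I R U : Type*} [Fintype I] [DecidableEq I] [Ring R]
    [AddCommGroup U] [Module R U] {w : I → U} {c : I → R} (hc : ∑ i, c i • w i = 0) (e : I) :
    ∑ i : {i // i ≠ e}, c i • deletion w e i = -(c e • w e) := by
  rw [Fintype.sum_eq_add_sum_subtype_ne _ e] at hc
  exact eq_neg_of_add_eq_zero_right hc

lemma sum_deletion_elimination {I R U : Type*} [Fintype I] [DecidableEq I] [CommRing R]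
    [AddCommGroup U] [Module R U] {v : I → U} {e : I} {c d : I → R} (hc : ∑ i, c i • v i = 0)
    (hd : ∑ i, d i • reorientAt v e i = 0) :
    ∑ i : {i // i ≠ e}, (d e * c i + c e * d i) • deletion v e i = 0 := by
  have c_sum : ∑ i : {i // i ≠ e}, c i • deletion v e i = -(c e • v e) :=
    sum_deletion_of_sum_eq_zero hc e
  have d_sum : ∑ i : {i // i ≠ e}, d i • deletion v e i = d e • v e := by
    rw [← deletion_reorientAt, sum_deletion_of_sum_eq_zero hd, reorientAt, if_pos rfl, smul_neg,
      neg_neg]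
  simp only [add_smul, mul_smul, Finset.sum_add_distrib, ← Finset.smul_sum, c_sum, d_sum]
  module

section

variable {I : Type*} [Fintype I] [LinearOrder I] {U : Type*} [AddCommGroup U] [Module ℝ U]

lemma ActiveI.of_comp_orderEmbedding {J : Type*} [Fintype J] [LinearOrder J] (f : J ↪o I)
    {w : I → U} {a : J} (h : ActiveI (w ∘ f) a) : ActiveI w (f a) := by
  obtain ⟨c, c_nonneg, c_sum, c_pos, c_below⟩ := h
  let d : I → ℝ := Function.extend f c 0
  have d_apply (j : J) : d (f j) = c j := f.injective.extend_apply c 0 j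
  have d_eq_zero (i : I) (hi : i ∉ range f) : d i = 0 := Function.extend_apply' _ _ _ hi
  refine ⟨d, fun i => ?_, ?_, by rwa [d_apply], fun i hi => ?_⟩
  · by_cases hf : i ∈ range f
    · obtain ⟨j, rfl⟩ := hf
      exact (c_nonneg j).trans_eq (d_apply j).symm
    · exact (d_eq_zero i hf).ge
  · rw [← c_sum]
    refine (Fintype.sum_of_injective f f.injective _ _ (fun i hi => ?_) fun j => ?_).symm
    · rw [d_eq_zero i hi, zero_smul]
    · rw [d_apply, Function.comp_apply]
  · by_cases hf : i ∈ range f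
    · obtain ⟨j, rfl⟩ := hf
      exact (d_apply j).trans (c_below j (f.lt_iff_lt.mp hi))
    · exact d_eq_zero i hf

variable {v w : I → U} {e : I}

lemma ActiveI.of_deletion {a : {i // i ≠ e}} (h : ActiveI (deletion w e) a) : ActiveI w a :=
  .of_comp_orderEmbedding (OrderEmbedding.subtype (· ≠ e)) h

lemma activeI_deletion_of_coeff_eq_zero {a : {i // i ≠ e}} {c : I → ℝ} (c_nonneg : ∀ i, 0 ≤ c i)
    (c_sum : ∑ i, c i • w i = 0) (c_pos : 0 < c a) (c_below : ∀ i < (a : I), c i = 0)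
    (hce : c e = 0) : ActiveI (deletion w e) a := by
  refine ⟨fun i => c i, fun i => c_nonneg i, ?_, c_pos, fun i hi => c_below i hi⟩
  rw [sum_deletion_of_sum_eq_zero c_sum, hce, zero_smul, neg_zero]

theorem ActiveI.deletion_or_deletion {a b : {i // i ≠ e}} (ha : ActiveI v a)
    (hb : ActiveI (reorientAt v e) b) :
    ActiveI (deletion v e) a ∨ ActiveI (deletion v e) b := by
  obtain ⟨c, c_nonneg, c_sum, c_pos, c_below⟩ := ha
  obtain ⟨d, d_nonneg, d_sum, d_pos, d_below⟩ := hb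
  obtain hce | hce := (c_nonneg e).eq_or_lt
  · exact .inl (activeI_deletion_of_coeff_eq_zero c_nonneg c_sum c_pos c_below hce.symm)
  obtain hde | hde := (d_nonneg e).eq_or_lt
  · right
    rw [← deletion_reorientAt]
    exact activeI_deletion_of_coeff_eq_zero d_nonneg d_sum d_pos d_below hde.symm
  let f (i : {i // i ≠ e}) : ℝ := d e * c i + c e * d i
  have f_nonneg (i) : 0 ≤ f i :=
    add_nonneg (mul_nonneg hde.le (c_nonneg i)) (mul_nonneg hce.le (d_nonneg i))
  have f_sum : ∑ i, f i • deletion v e i = 0 := sum_deletion_elimination c_sum d_sum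
  obtain hab | hba := le_total a b
  · refine .inl ⟨f, f_nonneg, f_sum, ?_, fun i hi => ?_⟩
    · exact add_pos_of_pos_of_nonneg (mul_pos hde c_pos) (mul_nonneg hce.le (d_nonneg a))
    · simp only [f, c_below i hi, d_below i (hi.trans_le hab), mul_zero, add_zero]
  · refine .inr ⟨f, f_nonneg, f_sum, ?_, fun i hi => ?_⟩
    · exact add_pos_of_nonneg_of_pos (mul_nonneg hde.le (c_nonneg b)) (mul_pos hce d_pos)
    · simp only [f, c_below i (hi.trans_le hba), d_below i hi, mul_zero, add_zero]

theorem statement19_general {b : {i // i ≠ e}}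
    (hdiffer : ¬ (ActiveI v b ↔ ActiveI (reorientAt v e) b))
    (hagree : ActiveI v b ↔ ActiveI (deletion v e) b) (a : {i // i ≠ e}) :
    ActiveI v a ↔ ActiveI (deletion v e) a := by
  have reorient_of_deletion (h : ActiveI (deletion v e) b) : ActiveI (reorientAt v e) b :=
    .of_deletion (by rwa [deletion_reorientAt])
  have not_deletion : ¬ ActiveI (deletion v e) b := fun h =>
    hdiffer (iff_of_true (hagree.mpr h) (reorient_of_deletion h))
  have reorient_active : ActiveI (reorientAt v e) b := by
    by_contra h
    exact hdiffer (iff_of_false (mt hagree.mp not_deletion) h)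
  exact ⟨fun h => (h.deletion_or_deletion reorient_active).resolve_right not_deletion,
    .of_deletion⟩

end

/-- propagation of activity agreement under deletion. If for some `b ≠ e`
(with `e` the greatest element) activity for `v` and for `-_e v` disagree while activity for
`v` and for `v \ e` agree, then activity for `v` and for `v \ e` agree at every `a ≠ e`. -/
theorem statement19 {V : Type*} [AddCommGroup V] [Module ℝ V] [FiniteDimensional ℝ V]
    {n : ℕ} (hn : 1 ≤ n) (e : Fin n) (he : ∀ i : Fin n, i ≤ e) (v : Fin n → V)
    (b : Fin n) (hb : b ≠ e)
    (h1 : ¬ (ActiveI v b ↔ ActiveI (reorientAt v e) b))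
    (h2 : ActiveI v b ↔ ActiveI (fun i : {i : Fin n // i ≠ e} => v ↑i) ⟨b, hb⟩) :
    ∀ a : {a : Fin n // a ≠ e},
      ActiveI v ↑a ↔ ActiveI (fun i : {i : Fin n // i ≠ e} => v ↑i) a :=
  statement19_general (b := ⟨b, hb⟩) h1 h2
end
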